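/- Let Σ be a non-singular fan in ℝ^n whose primitive generators n_1,…,n_r span ℤ^n over ℤ (so X_Σ = U(K_Σ)/G_Σ is simply connected). Then π_2(X_Σ) ≅ ℤ^{r−n}; moreover the loop space ΩU(K_Σ) (loops based at (1,…,1)) is path-connected and simply connected, and the map Ωq_Σ : ΩU(K_Σ) → ΩX_Σ is a universal covering projection with fiber ℤ^{r−n} (up to homotopy); in particular (Ωq_Σ)_* : π_k(ΩU(K_Σ)) → π_k(ΩX_Σ) is an isomorphism for every k ≥ 2. -/

import Mathlib

open scoped BigOperators
attribute [local instance] Classical.propDecidable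

noncomputable section

namespace Toric


/-! ### Cones and fans -/

/-- The real vector associated to an integer vector. -/
def zr {n : ℕ} (v : Fin n → ℤ) : Fin n → ℝ := fun i => (v i : ℝ)

/-- A convex rational polyhedral cone in `ℝ^n`. -/
def IsRatCone {n : ℕ} (σ : Set (Fin n → ℝ)) : Prop :=
  ∃ s : Finset (Fin n → ℤ),
    σ = {x | ∃ lam : (Fin n → ℤ) → ℝ, (∀ v, 0 ≤ lam v) ∧ x = ∑ v ∈ s, lam v • zr v}

/-- A cone is strongly convex if `σ ∩ (-σ) = {0}`. -/
def StronglyConvex {n : ℕ} (σ : Set (Fin n → ℝ)) : Prop := σ ∩ (-σ) = {0}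

/-- `τ` is a face of `σ`, cut out by a linear form nonnegative on `σ`. -/
def IsFaceOf {n : ℕ} (τ σ : Set (Fin n → ℝ)) : Prop :=
  ∃ L : (Fin n → ℝ) →ₗ[ℝ] ℝ, (∀ x ∈ σ, 0 ≤ L x) ∧ τ = σ ∩ {x | L x = 0}

/-- A fan in `ℝ^n`: a finite collection of strongly convex rational polyhedral cones,
closed under taking faces, such that the intersection of two cones is a face of each;
we also require that it strictly contains `{0}`. -/
structure Fan (n : ℕ) where
  cones : Set (Set (Fin n → ℝ))
  finite : cones.Finite
  ratCone : ∀ σ ∈ cones, IsRatCone σ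
  stronglyConvex : ∀ σ ∈ cones, StronglyConvex σ
  face_mem : ∀ σ ∈ cones, ∀ τ, IsFaceOf τ σ → τ ∈ cones
  inter_face : ∀ σ ∈ cones, ∀ τ ∈ cones, IsFaceOf (σ ∩ τ) σ
  zero_mem : ({0} : Set (Fin n → ℝ)) ∈ cones
  nontrivial : cones ≠ {({0} : Set (Fin n → ℝ))}

/-- A fan is complete if its cones cover `ℝ^n`. -/
def Fan.Complete {n : ℕ} (F : Fan n) : Prop := ⋃₀ F.cones = Set.univ

/-- A fan is non-singular if each of its cones is spanned by part of a `ℤ`-basis of `ℤ^n`. -/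
def Fan.NonSingular {n : ℕ} (F : Fan n) : Prop :=
  ∀ σ ∈ F.cones, ∃ (b : Module.Basis (Fin n) ℤ (Fin n → ℤ)) (s : Finset (Fin n)),
    σ = {x | ∃ lam : Fin n → ℝ, (∀ i, 0 ≤ lam i) ∧ x = ∑ i ∈ s, lam i • zr (b i)}

/-- The ray (one-dimensional cone) generated by a vector. -/
def ray {n : ℕ} (v : Fin n → ℝ) : Set (Fin n → ℝ) := {x | ∃ t : ℝ, 0 ≤ t ∧ x = t • v}

/-- The cone spanned by the vectors `n_i`, `i ∈ s`. -/
def coneIdx {n r : ℕ} (N : Fin r → Fin n → ℤ) (s : Finset (Fin r)) : Set (Fin n → ℝ) :=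
  {x | ∃ lam : Fin r → ℝ, (∀ i, 0 ≤ lam i) ∧ x = ∑ i ∈ s, lam i • zr (N i)}

/-- A point of `ℝ^n` lying in the lattice `ℤ^n`. -/
def IsLatticePoint {n : ℕ} (x : Fin n → ℝ) : Prop := ∀ i, ∃ m : ℤ, x i = (m : ℝ)

/-- `N 1, …, N r` is the (complete, repetition-free) list of primitive generators of the
one-dimensional cones of the fan `F`. -/
structure IsPrimGens {n r : ℕ} (F : Fan n) (N : Fin r → Fin n → ℤ) : Prop where
  ray_mem : ∀ k, ray (zr (N k)) ∈ F.cones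
  ne_zero : ∀ k, N k ≠ 0
  primitive : ∀ k, ray (zr (N k)) ∩ {x | IsLatticePoint x}
      = {x | ∃ c : ℕ, x = (c : ℝ) • zr (N k)}
  inj : Function.Injective N
  complete : ∀ σ ∈ F.cones, Module.finrank ℝ (Submodule.span ℝ σ) = 1 →
      ∃ k, σ = ray (zr (N k))

/-- Condition (2.9.1): a positive integral relation among the primitive generators. -/
def Cond1 {n r : ℕ} (N : Fin r → Fin n → ℤ) : Prop :=
  ∃ d : Fin r → ℕ, (∀ k, 0 < d k) ∧ ∑ k, (d k : ℤ) • N k = 0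

/-- Condition (2.9.2): the primitive generators span `ℤ^n` over `ℤ`. -/
def Cond2 {n r : ℕ} (N : Fin r → Fin n → ℤ) : Prop :=
  Submodule.span ℤ (Set.range N) = ⊤

/-- The underlying simplicial complex `K_Σ` of a fan. -/
def KC {n r : ℕ} (F : Fan n) (N : Fin r → Fin n → ℤ) : Set (Finset (Fin r)) :=
  {s | coneIdx N s ∈ F.cones}

/-- A primitive set: it spans no cone of the fan, but every proper subset does. -/
def PrimitiveSet {r : ℕ} (K : Set (Finset (Fin r))) (s : Finset (Fin r)) : Prop :=
  s ∉ K ∧ ∀ t ⊂ s, t ∈ K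

/-- `r_min`: the minimal cardinality of a primitive set. -/
def rmin {r : ℕ} (K : Set (Finset (Fin r))) : ℕ :=
  sInf {m | ∃ s : Finset (Fin r), PrimitiveSet K s ∧ s.card = m}

/-- `d_min = min {d_1, …, d_r}`. -/
def dmin {r : ℕ} (D : Fin r → ℕ) : ℕ := sInf (Set.range D)

/-- The stability dimension `d(D,Σ) = 2(r_min − 1) d_min − 2`. -/
def dBound {r : ℕ} (K : Set (Finset (Fin r))) (D : Fin r → ℕ) : ℤ :=
  2 * ((rmin K : ℤ) - 1) * (dmin D : ℤ) - 2

/-- The connectivity bound `C_D(Σ) = 2(r_min − 1) d_min − 1`. -/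
def CBound {r : ℕ} (K : Set (Finset (Fin r))) (D : Fin r → ℕ) : ℤ :=
  2 * ((rmin K : ℤ) - 1) * (dmin D : ℤ) - 1

/-! ### Coordinate subspaces, `U(K)`, `G_Σ` and the toric quotient -/

/-- The coordinate subspace `L_σ ⊆ ℂ^r`. -/
def LSub {r : ℕ} (σ : Finset (Fin r)) : Set (Fin r → ℂ) := {x | ∀ i ∈ σ, x i = 0}

/-- The complement `U(K)` of the coordinate subspace arrangement of type `K`. -/
def UK {r : ℕ} (K : Set (Finset (Fin r))) : Set (Fin r → ℂ) :=
  (⋃ σ ∈ {s : Finset (Fin r) | s ∉ K}, LSub σ)ᶜ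

lemma mem_UK {r : ℕ} {K : Set (Finset (Fin r))} {x : Fin r → ℂ} :
    x ∈ UK K ↔ ∀ σ : Finset (Fin r), σ ∉ K → ∃ i ∈ σ, x i ≠ 0 := by
  constructor
  · intro h σ hσ
    by_contra hc
    push_neg at hc
    exact h (Set.mem_biUnion hσ (fun i hi => hc i hi))
  · intro h hx
    rcases Set.mem_iUnion₂.1 hx with ⟨σ, hσ, hxσ⟩
    rcases h σ hσ with ⟨i, hi, hne⟩
    exact hne (hxσ i hi)

/-- The group `G_Σ` (as a subset of `ℂ^r`). -/
def GSet {n r : ℕ} (N : Fin r → Fin n → ℤ) : Set (Fin r → ℂ) :=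
  {μ | (∀ k, μ k ≠ 0) ∧ ∀ m : Fin n → ℤ, ∏ k, μ k ^ (∑ j, N k j * m j) = 1}

/-- The orbit relation of the `G_Σ`-action on `U(K_Σ)`. -/
def toricRel {n r : ℕ} (N : Fin r → Fin n → ℤ) (K : Set (Finset (Fin r)))
    (x y : ↥(UK K)) : Prop :=
  ∃ μ ∈ GSet N, (fun i => μ i * (x : Fin r → ℂ) i) = (y : Fin r → ℂ)

/-- The toric variety `X_Σ = U(K_Σ)/G_Σ`, as a topological quotient. -/
def XS {n r : ℕ} (N : Fin r → Fin n → ℤ) (K : Set (Finset (Fin r))) : Type :=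
  Quot (toricRel N K)

instance {n r : ℕ} (N : Fin r → Fin n → ℤ) (K : Set (Finset (Fin r))) :
    TopologicalSpace (XS N K) :=
  instTopologicalSpaceQuot

/-- The quotient map `q_Σ : U(K_Σ) → X_Σ`. -/
def qmap {n r : ℕ} (N : Fin r → Fin n → ℤ) (K : Set (Finset (Fin r))) :
    ↥(UK K) → XS N K :=
  Quot.mk (toricRel N K)

/-- `q_Σ` as a continuous map. -/
def qCont {n r : ℕ} (N : Fin r → Fin n → ℤ) (K : Set (Finset (Fin r))) :
    C(↥(UK K), XS N K) :=
  ⟨qmap N K, continuous_quot_mk⟩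

lemma coneIdx_empty {n r : ℕ} (N : Fin r → Fin n → ℤ) :
    coneIdx N (∅ : Finset (Fin r)) = ({0} : Set (Fin n → ℝ)) := by
  ext x
  constructor
  · rintro ⟨lam, -, hx⟩
    simpa using hx
  · intro hx
    exact ⟨0, fun i => le_refl 0, by simpa using hx⟩

lemma empty_mem_KC {n r : ℕ} (F : Fan n) (N : Fin r → Fin n → ℤ) :
    (∅ : Finset (Fin r)) ∈ KC F N := by
  show coneIdx N ∅ ∈ F.cones
  rw [coneIdx_empty]
  exact F.zero_mem

/-- The point `(1,…,1)`. -/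
def onesC {r : ℕ} : Fin r → ℂ := fun _ => 1

lemma ones_mem_UK {r : ℕ} {K : Set (Finset (Fin r))} (h : (∅ : Finset (Fin r)) ∈ K) :
    (onesC : Fin r → ℂ) ∈ UK K := by
  rw [mem_UK]
  intro σ hσ
  rcases Finset.nonempty_iff_ne_empty.2 (fun he : σ = ∅ => hσ (by rw [he]; exact h)) with ⟨i, hi⟩
  exact ⟨i, hi, one_ne_zero⟩

/-- The base point `(1,…,1)` of `U(K_Σ)`. -/
def onesUK {r : ℕ} {K : Set (Finset (Fin r))} (h : (∅ : Finset (Fin r)) ∈ K) : ↥(UK K) :=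
  ⟨onesC, ones_mem_UK h⟩

/-- The base point `[1,…,1]` of `X_Σ`. -/
def baseX {n r : ℕ} (N : Fin r → Fin n → ℤ) (K : Set (Finset (Fin r)))
    (h : (∅ : Finset (Fin r)) ∈ K) : XS N K :=
  qmap N K (onesUK h)



/-! ### Spaces of tuples of monic polynomials -/

/-- The monic polynomial `z^d + a_{d-1} z^{d-1} + ⋯ + a_0` with coefficient data `a`. -/
def toPoly {d : ℕ} (a : Fin d → ℂ) : Polynomial ℂ :=
  Polynomial.X ^ d + ∑ i : Fin d, Polynomial.C (a i) * Polynomial.X ^ (i : ℕ)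

/-- The space `Pol*_D(S¹, X_Σ)` of `r`-tuples of monic polynomials of multidegree `D`
(in coefficient coordinates) such that for every `σ ∉ K` the polynomials `{f_i : i ∈ σ}`
have no common real root. -/
def PolSp {r : ℕ} (K : Set (Finset (Fin r))) (D : Fin r → ℕ) :
    Set (∀ k : Fin r, Fin (D k) → ℂ) :=
  {f | ∀ σ : Finset (Fin r), σ ∉ K → ∀ t : ℝ,
        ∃ k ∈ σ, (toPoly (f k)).eval (t : ℂ) ≠ 0}

lemma polEval_mem_UK {r : ℕ} {K : Set (Finset (Fin r))} {D : Fin r → ℕ}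
    (f : ↥(PolSp K D)) (t : ℝ) :
    (fun k => (toPoly (f.1 k)).eval (t : ℂ)) ∈ UK K :=
  mem_UK.2 fun σ hσ => f.2 σ hσ t

/-! ### Loop spaces and induced maps on homotopy groups -/

/-- The loop space `Ω X = Map*(S¹, X)` with `S¹ = ℝ ∪ {∞}` (the one-point
compactification of `ℝ`), based at `x₀`. -/
def Loop (X : Type*) [TopologicalSpace X] (x₀ : X) : Type _ :=
  {γ : C(OnePoint ℝ, X) // γ OnePoint.infty = x₀}

instance {X : Type*} [TopologicalSpace X] (x₀ : X) : TopologicalSpace (Loop X x₀) :=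
  instTopologicalSpaceSubtype

/-- The constant loop, base point of `Ω X`. -/
def Loop.const {X : Type*} [TopologicalSpace X] (x₀ : X) : Loop X x₀ :=
  ⟨ContinuousMap.const _ x₀, rfl⟩

/-- A based continuous map induces a continuous map of loop spaces. -/
def loopMap {X Y : Type*} [TopologicalSpace X] [TopologicalSpace Y] {x₀ : X} {y₀ : Y}
    (f : C(X, Y)) (hf : f x₀ = y₀) : C(Loop X x₀, Loop Y y₀) where
  toFun γ := ⟨f.comp γ.1, by simp [γ.2, hf]⟩
  continuous_toFun := by
    apply Continuous.subtype_mk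
    exact (ContinuousMap.continuous_postcomp f).comp continuous_subtype_val

/-- The map induced by a continuous map on homotopy groups (`π_q`). -/
def piMap (q : ℕ) {X Y : Type*} [TopologicalSpace X] [TopologicalSpace Y]
    (f : C(X, Y)) (x : X) :
    HomotopyGroup (Fin q) X x → HomotopyGroup (Fin q) Y (f x) :=
  Quotient.map
    (fun p => ⟨f.comp p.1, fun y hy => by
      show f (p.1 y) = f x
      rw [p.2 y hy]⟩)
    (fun p₁ p₂ h => h.elim fun H => ⟨H.compContinuousMap f⟩)

/-- `f` is a homotopy equivalence through dimension `d`: it induces isomorphisms on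
`π_k` for all `k ≤ d` (at every base point). -/
def HomotopyEquivThrough {X Y : Type*} [TopologicalSpace X] [TopologicalSpace Y]
    (f : C(X, Y)) (d : ℤ) : Prop :=
  ∀ (x : X) (k : ℕ), (k : ℤ) ≤ d → Function.Bijective (piMap k f x)

/-- A genuine homotopy equivalence. -/
def IsHtpyEquiv {X Y : Type*} [TopologicalSpace X] [TopologicalSpace Y]
    (f : C(X, Y)) : Prop :=
  ∃ g : C(Y, X), (f.comp g).Homotopic (ContinuousMap.id Y) ∧
    (g.comp f).Homotopic (ContinuousMap.id X)

/-! ### `i_D`, lifts, and stabilization maps -/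

/-- `j : Pol*_D → Ω U(K_Σ)` is a lift of `i_D` through `Ω q_Σ`, i.e. `Ω q_Σ ∘ j = i_D`:
for every tuple `f` and real `t`, the loop `j f` at time `t` lies over the point
`[f_1(t), …, f_r(t)]` of `X_Σ` (and at `∞` over `[1,…,1]`, automatically). -/
def IsLiftOfID {n r : ℕ} (N : Fin r → Fin n → ℤ) (K : Set (Finset (Fin r)))
    (hE : (∅ : Finset (Fin r)) ∈ K) (D : Fin r → ℕ)
    (j : ↥(PolSp K D) → Loop ↥(UK K) (onesUK hE)) : Prop :=
  ∀ (f : ↥(PolSp K D)) (t : ℝ),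
    qmap N K ((j f).1 (t : OnePoint ℝ)) =
      qmap N K ⟨fun k => (toPoly (f.1 k)).eval (t : ℂ), polEval_mem_UK f t⟩

/-- `i : Pol*_D → Ω X_Σ` is the map `i_D` given by evaluation. -/
def IsID {n r : ℕ} (N : Fin r → Fin n → ℤ) (K : Set (Finset (Fin r)))
    (hE : (∅ : Finset (Fin r)) ∈ K) (D : Fin r → ℕ)
    (i : ↥(PolSp K D) → Loop (XS N K) (baseX N K hE)) : Prop :=
  ∀ (f : ↥(PolSp K D)) (t : ℝ),
    (i f).1 (t : OnePoint ℝ) =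
      qmap N K ⟨fun k => (toPoly (f.1 k)).eval (t : ℂ), polEval_mem_UK f t⟩

/-- `φ` is an admissible parameter for the stabilization maps: a homeomorphism of `ℂ`
onto the half plane `{Re < bound}` carrying `ℝ` onto `(-∞, bound)`. -/
def AdmissiblePhi (bound : ℝ) (φ : ℂ → ℂ) : Prop :=
  Continuous φ ∧ Function.Injective φ ∧ IsOpenMap φ ∧
    Set.range φ = {w : ℂ | w.re < bound} ∧
    φ '' {z : ℂ | z.im = 0} = {z : ℂ | z.im = 0 ∧ z.re < bound}

/-- The defining property of the stabilization map
`s_{D,D'}(f)_k = φ(f_k) · (z - x_k)^{d'_k - d_k}`, where `φ(f)` denotes the monic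
polynomial whose roots are the images under `φ` of the roots of `f`. -/
def StabSpec {r : ℕ} (K : Set (Finset (Fin r))) (φ : ℂ → ℂ) (xpt : Fin r → ℂ)
    (D D' : Fin r → ℕ) (s : ↥(PolSp K D) → ↥(PolSp K D')) : Prop :=
  ∀ (f : ↥(PolSp K D)) (k : Fin r),
    toPoly ((s f).1 k) =
      (((toPoly (f.1 k)).roots.map φ).map
        fun α => Polynomial.X - Polynomial.C α).prod
        * (Polynomial.X - Polynomial.C (xpt k)) ^ (D' k - D k)

/-- The general defining property of the map `j_D : Pol*_D → Ω U(K_Σ)`: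
when `∑ d_k n_k = 0` it is a lift of `i_D` through `Ω q_Σ`, and otherwise it is the
composite `j_{D₀} ∘ s_{D,D₀}` for a suitable `D₀ = m₀ D*` as in condition (2.9.1). -/
def IsJD {n r : ℕ} (N : Fin r → Fin n → ℤ) (K : Set (Finset (Fin r)))
    (hE : (∅ : Finset (Fin r)) ∈ K) (D : Fin r → ℕ)
    (j : C(↥(PolSp K D), Loop ↥(UK K) (onesUK hE))) : Prop :=
  ((∑ k, (D k : ℤ) • N k = 0) ∧ IsLiftOfID N K hE D j) ∨
  ((∑ k, (D k : ℤ) • N k ≠ 0) ∧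
    ∃ (dstar : Fin r → ℕ) (m₀ : ℕ),
      (∀ k, 0 < dstar k) ∧ (∑ k, (dstar k : ℤ) • N k = 0) ∧
      (∀ k, D k < m₀ * dstar k) ∧
      ∃ (φ : ℂ → ℂ) (xpt : Fin r → ℂ),
        AdmissiblePhi ((∑ k, D k : ℕ) : ℝ) φ ∧
        (∀ k, ((∑ k, D k : ℕ) : ℝ) < (xpt k).re) ∧ Function.Injective xpt ∧
        ∃ (j₀ : C(↥(PolSp K fun k => m₀ * dstar k), Loop ↥(UK K) (onesUK hE)))
          (s₀ : C(↥(PolSp K D), ↥(PolSp K fun k => m₀ * dstar k))),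
          IsLiftOfID N K hE _ j₀ ∧ StabSpec K φ xpt D _ s₀ ∧ j = j₀.comp s₀)

/-! ### Stabilized (colimit) spaces -/

/-- The multidegree `D + t·e`. -/
def Dt {r : ℕ} (D : Fin r → ℕ) (t : ℕ) : Fin r → ℕ := fun k => D k + t

/-- Carrier of the stabilized space: the disjoint union of the `Pol*_{D+te}`. -/
def ColCar {r : ℕ} (K : Set (Finset (Fin r))) (D : Fin r → ℕ) : Type :=
  Σ t : ℕ, ↥(PolSp K (Dt D t))

instance {r : ℕ} (K : Set (Finset (Fin r))) (D : Fin r → ℕ) :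
    TopologicalSpace (ColCar K D) := by
  unfold ColCar; infer_instance

/-- The identifications generating the colimit along the stabilization maps. -/
def ColRel {r : ℕ} (K : Set (Finset (Fin r))) (D : Fin r → ℕ)
    (s : ∀ t : ℕ, ↥(PolSp K (Dt D t)) → ↥(PolSp K (Dt D (t + 1)))) :
    ColCar K D → ColCar K D → Prop :=
  fun a b => b = ⟨a.1 + 1, s a.1 a.2⟩

/-- The stabilized space `Pol^Σ_{D+∞} = colim_t Pol*_{D+te}(S¹, X_Σ)`. -/
def PolColim {r : ℕ} (K : Set (Finset (Fin r))) (D : Fin r → ℕ)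
    (s : ∀ t : ℕ, ↥(PolSp K (Dt D t)) → ↥(PolSp K (Dt D (t + 1)))) : Type :=
  Quot (ColRel K D s)

instance {r : ℕ} (K : Set (Finset (Fin r))) (D : Fin r → ℕ)
    (s : ∀ t : ℕ, ↥(PolSp K (Dt D t)) → ↥(PolSp K (Dt D (t + 1)))) :
    TopologicalSpace (PolColim K D s) :=
  instTopologicalSpaceQuot

/-- Admissibility of a family of stabilization maps `s_{D+te}`. -/
def AdmissibleStabFamily {r : ℕ} (K : Set (Finset (Fin r))) (D : Fin r → ℕ)
    (s : ∀ t : ℕ, ↥(PolSp K (Dt D t)) → ↥(PolSp K (Dt D (t + 1)))) : Prop :=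
  ∀ t : ℕ, ∃ (φ : ℂ → ℂ) (xpt : Fin r → ℂ),
    AdmissiblePhi ((∑ k, Dt D t k : ℕ) : ℝ) φ ∧
    (∀ k, ((∑ k, Dt D t k : ℕ) : ℝ) < (xpt k).re) ∧ Function.Injective xpt ∧
    StabSpec K φ xpt (Dt D t) (Dt D (t + 1)) (s t)


/-! ### Extension of maps into complements of arrangements of real codimension at least four -/

lemma ext_gen {ι : Type} [Fintype ι] (hι : Fintype.card ι ≤ 3) {r : ℕ} (U : Set (Fin r → ℂ))
    (hU : IsOpen U) (hV : ∀ x : Fin r → ℂ, (∀ i j, i ≠ j → x i ≠ 0 ∨ x j ≠ 0) → x ∈ U)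
    (F : (ι → ℝ) → (Fin r → ℂ)) (hF : Continuous F) (Q A : Set (ι → ℝ)) (hQ : IsCompact Q)
    (hA : IsClosed A) (hAQ : A ⊆ Q) (hFA : ∀ x ∈ A, F x ∈ U) :
    ∃ G : (ι → ℝ) → (Fin r → ℂ), Continuous G ∧ (∀ x ∈ A, G x = F x) ∧ ∀ x ∈ Q, G x ∈ U := by
  have hAc : IsCompact A := hQ.of_isClosed_subset hA hAQ
  obtain ⟨L, hL, hAL, hLU⟩ := exists_compact_between hAc (hU.preimage hF) hFA
  have hFL : F '' L ⊆ U := by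
    rintro _ ⟨x, hx, rfl⟩; exact hLU hx
  obtain ⟨δ, hδ, hδU⟩ := (hL.image hF).exists_thickening_subset_open hU hFL
  obtain ⟨F', hF'c, hF'd, -⟩ := hF.exists_contDiff_approx (n := 1) (ε := fun _ => δ / 2)
    continuous_const (fun _ => by positivity)
  -- generic translation
  have hF'c0 : Continuous F' := hF'c.continuous
  let S : (Fin r × Fin r) → Set (Fin r → ℂ) := fun p =>
    {v | p.1 ≠ p.2 → ∀ x ∈ Q, F' x p.1 + v p.1 ≠ 0 ∨ F' x p.2 + v p.2 ≠ 0}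
  have hS : ∀ p, IsOpen (S p) ∧ Dense (S p) := by
    rintro ⟨i, j⟩
    by_cases hij : i = j
    · have : S (i, j) = Set.univ := by
        ext v; simp [S, hij]
      rw [this]; exact ⟨isOpen_univ, dense_univ⟩
    · let f : (ι → ℝ) → ℂ × ℂ := fun x => (-(F' x i), -(F' x j))
      have hf : ContDiff ℝ 1 f := by
        have h1 : ContDiff ℝ 1 fun x => F' x i := (contDiff_pi.1 hF'c) i
        have h2 : ContDiff ℝ 1 fun x => F' x j := (contDiff_pi.1 hF'c) j
        exact h1.neg.prodMk h2.neg
      have hd : Dense (Set.range f)ᶜ := by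
        apply hf.dense_compl_range_of_finrank_lt_finrank
        have : Module.finrank ℝ (ℂ × ℂ) = 4 := by
          rw [Module.finrank_prod, Complex.finrank_real_complex]
        rw [this, Module.finrank_fintype_fun_eq_card]; omega
      have hd' : Dense (f '' Q)ᶜ := hd.mono (Set.compl_subset_compl.2 (Set.image_subset_range _ _))
      have ho' : IsOpen (f '' Q)ᶜ := (hQ.image hf.continuous).isClosed.isOpen_compl
      let pr : (Fin r → ℂ) →L[ℂ] ℂ × ℂ :=
        (ContinuousLinearMap.proj i).prod (ContinuousLinearMap.proj j)
      have hsurj : Function.Surjective pr := by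
        rintro ⟨a, b⟩
        refine ⟨Function.update (fun _ => b) i a, ?_⟩
        simp [pr, Function.update_of_ne (Ne.symm hij)]
      have hopen : IsOpenMap pr := pr.isOpenMap hsurj
      have hSe : S (i, j) = pr ⁻¹' (f '' Q)ᶜ := by
        ext v
        simp only [S, Set.mem_ofPred_eq, Set.mem_preimage, Set.mem_compl_iff, Set.mem_image,
          not_exists, not_and]
        constructor
        · intro h x hx he
          have he' : (-(F' x i), -(F' x j)) = (v i, v j) := he
          simp only [Prod.mk.injEq] at he'
          rcases h hij x hx with h | h
          · exact h (by rw [← he'.1]; ring)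
          · exact h (by rw [← he'.2]; ring)
        · intro h _ x hx
          by_contra hc
          push Not at hc
          refine h x hx ?_
          show (-(F' x i), -(F' x j)) = (v i, v j)
          rw [Prod.mk.injEq]
          exact ⟨by linear_combination -hc.1, by linear_combination -hc.2⟩
      rw [hSe]
      exact ⟨ho'.preimage pr.continuous, hd'.preimage hopen⟩
  have hdense : Dense (⋂ p, S p) := dense_iInter_of_isOpen (fun p => (hS p).1) (fun p => (hS p).2)
  obtain ⟨v, hv, hvS⟩ := (hdense.inter_open_nonempty (Metric.ball 0 (δ / 2)) Metric.isOpen_ball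
    ⟨0, by simp; exact hδ⟩)
  rw [Set.mem_iInter] at hvS
  obtain ⟨χ, hχ0, hχ1, hχI⟩ := exists_continuous_zero_one_of_isClosed hA
    (isOpen_interior (s := L)).isClosed_compl
    (Set.disjoint_left.2 fun x hx hx' => hx' (hAL hx))
  refine ⟨fun x => F x + (χ x) • (F' x + v - F x), by fun_prop, ?_, ?_⟩
  · intro x hx
    simp [hχ0 hx]
  · intro x hx
    by_cases hxL : x ∈ interior L
    · apply hδU
      rw [Metric.mem_thickening_iff]
      refine ⟨F x, ⟨x, interior_subset hxL, rfl⟩, ?_⟩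
      rw [dist_eq_norm, add_sub_cancel_left, norm_smul]
      have h1 : ‖F' x + v - F x‖ < δ := by
        have e : F' x + v - F x = (F' x - F x) + v := by abel
        rw [e]
        have h2 := hF'd x
        rw [dist_eq_norm] at h2
        have h3 : ‖v‖ < δ / 2 := by simpa using hv
        calc _ ≤ ‖F' x - F x‖ + ‖v‖ := norm_add_le _ _
          _ < δ / 2 + δ / 2 := add_lt_add h2 h3
          _ = δ := by ring
      have h4 : ‖χ x‖ ≤ 1 := by
        rw [Real.norm_eq_abs, abs_le]
        have := hχI x
        exact ⟨by linarith [this.1], this.2⟩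
      calc ‖χ x‖ * ‖F' x + v - F x‖ ≤ 1 * ‖F' x + v - F x‖ := by gcongr
        _ < δ := by rw [one_mul]; exact h1
    · have : χ x = 1 := hχ1 hxL
      have e : F x + (χ x) • (F' x + v - F x) = F' x + v := by rw [this]; simp
      show F x + (χ x) • (F' x + v - F x) ∈ U
      rw [e]
      apply hV
      intro i j hij
      exact hvS (i, j) hij x hx

/-- The inclusion of the cube. -/
def cubeIncl (ι : Type) : (ι → unitInterval) → (ι → ℝ) := fun x i => (x i : ℝ)

/-- The projection to the cube. -/
def cubeProj (ι : Type) : (ι → ℝ) → (ι → unitInterval) :=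
  fun x i => Set.projIcc 0 1 zero_le_one (x i)

lemma continuous_cubeIncl (ι : Type) : Continuous (cubeIncl ι) := by
  unfold cubeIncl; fun_prop

lemma continuous_cubeProj (ι : Type) : Continuous (cubeProj ι) := by
  unfold cubeProj
  exact continuous_pi fun i => continuous_projIcc.comp (continuous_apply i)

lemma cubeProj_incl {ι : Type} (x : ι → unitInterval) : cubeProj ι (cubeIncl ι x) = x := by
  funext i
  simp [cubeProj, cubeIncl]

/-- Extension of a map defined on a closed subset of a cube of dimension at most three. -/
lemma ext_cube {ι : Type} [Fintype ι] (hι : Fintype.card ι ≤ 3) {r : ℕ} (U : Set (Fin r → ℂ))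
    (hU : IsOpen U) (hV : ∀ x : Fin r → ℂ, (∀ i j, i ≠ j → x i ≠ 0 ∨ x j ≠ 0) → x ∈ U)
    (A : Set (ι → unitInterval)) (hA : IsClosed A) (g : (ι → unitInterval) → U)
    (hg : ContinuousOn g A) :
    ∃ G : C(ι → unitInterval, U), ∀ x ∈ A, G x = g x := by
  let g0 : C(A, Fin r → ℂ) := ⟨fun x => (g x : Fin r → ℂ),
    continuous_subtype_val.comp (continuousOn_iff_continuous_domRestrict.1 hg)⟩
  obtain ⟨g1, hg1⟩ := ContinuousMap.exists_restrict_eq hA g0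
  have hg1' : ∀ x ∈ A, g1 x = (g x : Fin r → ℂ) := fun x hx => by
    have := DFunLike.congr_fun hg1 ⟨x, hx⟩
    simpa [g0] using this
  have hcomp : ∀ {B : Set (ι → unitInterval)}, IsClosed B → IsCompact (cubeIncl ι '' B) :=
    fun hB => hB.isCompact.image (continuous_cubeIncl ι)
  obtain ⟨G, hG, hGA, hGQ⟩ := ext_gen hι U hU hV (fun x => g1 (cubeProj ι x))
    (g1.continuous.comp (continuous_cubeProj ι)) (cubeIncl ι '' Set.univ) (cubeIncl ι '' A)
    (hcomp isClosed_univ) (hcomp hA).isClosed (Set.image_mono (Set.subset_univ _)) (by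
      rintro _ ⟨x, hx, rfl⟩
      show g1 _ ∈ U
      rw [cubeProj_incl, hg1' x hx]
      exact (g x).2)
  refine ⟨⟨fun x => ⟨G (cubeIncl ι x), hGQ _ ⟨x, trivial, rfl⟩⟩,
    (hG.comp (continuous_cubeIncl ι)).subtype_mk _⟩, fun x hx => ?_⟩
  apply Subtype.ext
  show G (cubeIncl ι x) = _
  rw [hGA _ ⟨x, hx, rfl⟩]
  show g1 _ = _
  rw [cubeProj_incl, hg1' x hx]


/-! ### Continuous logarithms -/

/-- Every nowhere vanishing continuous function on `A` has a continuous logarithm. -/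
def HasLogs {Y : Type*} [TopologicalSpace Y] (A : Set Y) : Prop :=
  ∀ δ : Y → ℂ, ContinuousOn δ A → (∀ x ∈ A, δ x ≠ 0) →
    ∃ z : Y → ℂ, ContinuousOn z A ∧ ∀ x ∈ A, Complex.exp (z x) = δ x

lemma hasLogs_singleton {Y : Type*} [TopologicalSpace Y] (p : Y) : HasLogs ({p} : Set Y) := by
  intro δ _ h0
  refine ⟨fun _ => Complex.log (δ p), continuousOn_const, ?_⟩
  rintro x rfl
  exact Complex.exp_log (h0 x rfl)

lemma hasLogs_of_homotopy {Y : Type*} [TopologicalSpace Y] {A B : Set Y}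
    (H : unitInterval × Y → Y) (hH : Continuous H) (hA : ∀ s, ∀ x ∈ A, H (s, x) ∈ A)
    (h1 : ∀ x ∈ A, H (1, x) = x) (h0 : ∀ x ∈ A, H (0, x) ∈ B) (hBA : B ⊆ A)
    (hB : HasLogs B) : HasLogs A := by
  intro δ hδ hne
  obtain ⟨w, hw, hwe⟩ := hB δ (hδ.mono hBA) (fun x hx => hne x (hBA hx))
  have c1 : Continuous fun p : unitInterval × A => H (p.1, (p.2 : Y)) := by fun_prop
  let K : C(unitInterval × A, {z : ℂ // z ≠ 0}) :=
    ⟨fun p => ⟨δ (H (p.1, p.2)), hne _ (hA _ _ p.2.2)⟩,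
      (hδ.comp_continuous c1 (fun p => hA _ _ p.2.2)).subtype_mk _⟩
  have c0 : Continuous fun p : A => H (0, (p : Y)) := by fun_prop
  let f : C(A, ℂ) := ⟨fun p => w (H (0, p)), hw.comp_continuous c0 (fun p => h0 _ p.2)⟩
  have hK : ∀ a, K (0, a) = (fun z : ℂ ↦ (⟨_, z.exp_ne_zero⟩ : {z : ℂ // z ≠ 0})) (f a) := by
    intro a
    apply Subtype.ext
    exact (hwe _ (h0 _ a.2)).symm
  let Lf := Complex.isCoveringMap_exp.liftHomotopy K f hK
  have hL : ∀ p, Complex.exp (Lf p) = δ (H (p.1, p.2)) := fun p => by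
    have := congr_fun (Complex.isCoveringMap_exp.liftHomotopy_lifts K f hK) p
    exact congrArg Subtype.val this
  refine ⟨fun x => if h : x ∈ A then Lf (1, ⟨x, h⟩) else 0, ?_, ?_⟩
  · rw [continuousOn_iff_continuous_domRestrict]
    have : Continuous fun a : A => Lf (1, a) := by fun_prop
    convert this using 1
    funext a
    simp
  · intro x hx
    simp only [hx, dite_true]
    rw [hL]
    simp only [h1 x hx]

lemma hasLogs_retract {Y : Type*} [TopologicalSpace Y] {A : Set Y}
    (ρ : Y → Y) (hρ : Continuous ρ) (hA : ∀ x, ρ x ∈ A) (h1 : ∀ x ∈ A, ρ x = x)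
    (hY : HasLogs (Set.univ : Set Y)) : HasLogs A := by
  intro δ hδ hne
  obtain ⟨z, hz, he⟩ := hY (fun x => δ (ρ x)) (hδ.comp_continuous hρ hA).continuousOn
    (fun x _ => hne _ (hA x))
  exact ⟨z, hz.mono (Set.subset_univ _), fun x hx => by rw [he x trivial, h1 x hx]⟩

lemma hasLogs_cube (ι : Type) : HasLogs (Set.univ : Set (ι → unitInterval)) := by
  refine hasLogs_of_homotopy (B := {0}) (fun p i => p.1 * p.2 i) (by fun_prop) (fun _ _ _ => trivial)
    ?_ ?_ (Set.subset_univ _) (hasLogs_singleton _)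
  · intro x _; funext i; simp
  · intro x _
    rw [Set.mem_singleton_iff]
    funext i; simp

lemma hasLogs_face {ι : Type} (i : ι) (c : unitInterval) :
    HasLogs {x : ι → unitInterval | x i = c} := by
  refine hasLogs_retract (fun x => Function.update x i c) (by fun_prop) ?_ ?_ (hasLogs_cube ι)
  · intro x; simp
  · intro x hx
    have hx' : x i = c := hx
    rw [← hx']; simp

/-- The boundary of the cube with the open top face in direction `j` removed. -/
def openBox {ι : Type} (j : ι) : Set (ι → unitInterval) :=
  {x | x j = 0 ∨ ∃ i, i ≠ j ∧ (x i = 0 ∨ x i = 1)}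

lemma isClosed_openBox {ι : Type} [Fintype ι] (j : ι) : IsClosed (openBox j) := by
  have : openBox j = {x : ι → unitInterval | x j = 0} ∪
      ⋃ i : ι, {x : ι → unitInterval | i ≠ j ∧ (x i = 0 ∨ x i = 1)} := by
    ext x; simp [openBox]
  rw [this]
  refine (isClosed_eq (by fun_prop) (by fun_prop)).union (isClosed_iUnion_of_finite fun i => ?_)
  by_cases h : i = j
  · simp [h]
  · simp only [ne_eq, h, not_false_eq_true, true_and]
    exact (isClosed_eq (by fun_prop) (by fun_prop)).union
      (isClosed_eq (by fun_prop) (by fun_prop))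

lemma isClosed_boundary (ι : Type) [Fintype ι] : IsClosed (Cube.boundary ι) := by
  have : Cube.boundary ι = ⋃ i : ι, {x : ι → unitInterval | x i = 0 ∨ x i = 1} := by
    ext x; simp [Cube.boundary]
  rw [this]
  refine isClosed_iUnion_of_finite fun i => ?_
  exact (isClosed_eq (by fun_prop) (by fun_prop)).union
      (isClosed_eq (by fun_prop) (by fun_prop))

lemma hasLogs_openBox {ι : Type} (j : ι) : HasLogs (openBox j) := by
  refine hasLogs_of_homotopy (B := {x | x j = 0})
    (fun p => Function.update p.2 j (p.1 * p.2 j)) (by fun_prop) ?_ ?_ ?_ ?_ (hasLogs_face j 0)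
  · rintro s x (hx | ⟨i, hij, hx⟩)
    · left; simp [hx]
    · right; exact ⟨i, hij, by simpa [Function.update_of_ne hij] using hx⟩
  · intro x _; simp
  · intro x _; simp
  · intro x hx; exact Or.inl hx

/-- Two logarithms on a preconnected set differ by a constant. -/
lemma log_unique {Y : Type*} [TopologicalSpace Y] {S : Set Y} (hS : IsPreconnected S)
    {z w : Y → ℂ} (hz : ContinuousOn z S) (hw : ContinuousOn w S)
    (h : ∀ x ∈ S, Complex.exp (z x) = Complex.exp (w x)) {x y : Y} (hx : x ∈ S) (hy : y ∈ S) :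
    z x - w x = z y - w y := by
  let g : Y → ℂ := fun x => (z x - w x) / (2 * Real.pi * Complex.I)
  have hpi : (2 * Real.pi * Complex.I : ℂ) ≠ 0 := Complex.two_pi_I_ne_zero
  have hg : ContinuousOn g S := (hz.sub hw).div_const _
  have hmaps : Set.MapsTo g S (Set.range (Int.cast : ℤ → ℂ)) := by
    intro x hx
    obtain ⟨n, hn⟩ := Complex.exp_eq_exp_iff_exists_int.1 (h x hx)
    refine ⟨n, ?_⟩
    simp only [g]
    rw [hn, add_sub_cancel_left, mul_div_assoc, div_self hpi, mul_one]
  have hd : IsDiscrete (Set.range (Int.cast : ℤ → ℂ)) := by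
    have he : Topology.IsEmbedding (Int.cast : ℤ → ℂ) := by
      have := Complex.isometry_ofReal.isEmbedding.comp Int.isClosedEmbedding_coe_real.isEmbedding
      convert this using 1
      funext n; simp
    exact ⟨he.toHomeomorph.discreteTopology_iff.1 inferInstance⟩
  have := hS.constant_of_mapsTo hd hg hmaps hx hy
  simp only [g] at this
  field_simp at this
  exact this

lemma hasLogs_union {Y : Type*} [TopologicalSpace Y] {A B : Set Y} (hA : IsClosed A)
    (hB : IsClosed B) (hLA : HasLogs A) (hLB : HasLogs B) (hAB : IsPreconnected (A ∩ B)) :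
    HasLogs (A ∪ B) := by
  intro δ hδ hne
  obtain ⟨z, hz, hze⟩ := hLA δ (hδ.mono Set.subset_union_left) (fun x hx => hne x (Or.inl hx))
  obtain ⟨w, hw, hwe⟩ := hLB δ (hδ.mono Set.subset_union_right) (fun x hx => hne x (Or.inr hx))
  obtain ⟨c, hc, hce⟩ : ∃ c : ℂ, Complex.exp c = 1 ∧ ∀ x ∈ A ∩ B, z x = w x + c := by
    by_cases hne : (A ∩ B).Nonempty
    · obtain ⟨p, hp⟩ := hne
      have hexp : ∀ x ∈ A ∩ B, Complex.exp (z x) = Complex.exp (w x) :=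
        fun x hx => by rw [hze x hx.1, hwe x hx.2]
      refine ⟨z p - w p, ?_, fun x hx => ?_⟩
      · rw [Complex.exp_sub, hexp p hp, div_self (Complex.exp_ne_zero _)]
      · have := log_unique hAB (hz.mono Set.inter_subset_left) (hw.mono Set.inter_subset_right)
          hexp hx hp
        rw [← this]; ring
    · exact ⟨0, Complex.exp_zero, fun x hx => (hne ⟨x, hx⟩).elim⟩
  refine ⟨fun x => if x ∈ A then z x else w x + c, ?_, ?_⟩
  · refine ContinuousOn.union_of_isClosed (hz.congr ?_) ((hw.add_const c).congr ?_) hA hB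
    · intro x hx; simp [hx]
    · intro x hx
      by_cases h : x ∈ A
      · simp [h, hce x ⟨h, hx⟩]
      · simp [h]
  · rintro x hx
    by_cases h : x ∈ A
    · simp [h, hze x h]
    · have hB' : x ∈ B := hx.resolve_left h
      simp [h, Complex.exp_add, hc, hwe x hB']

lemma hasLogs_boundary {ι : Type} [Fintype ι] (hι : 3 ≤ Fintype.card ι) :
    HasLogs (Cube.boundary ι) := by
  have : Nonempty ι := Fintype.card_pos_iff.1 (by omega)
  obtain ⟨j⟩ := this
  have hU : Cube.boundary ι = openBox j ∪ {x | x j = 1} := by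
    ext x
    constructor
    · rintro ⟨i, hi⟩
      by_cases hij : i = j
      · subst hij
        rcases hi with hi | hi
        · exact Or.inl (Or.inl hi)
        · exact Or.inr hi
      · exact Or.inl (Or.inr ⟨i, hij, hi⟩)
    · rintro ((h | ⟨i, -, hi⟩) | h)
      · exact ⟨j, Or.inl h⟩
      · exact ⟨i, hi⟩
      · exact ⟨j, Or.inr h⟩
  rw [hU]
  refine hasLogs_union (isClosed_openBox j) (isClosed_eq (by fun_prop) (by fun_prop))
    (hasLogs_openBox j) (hasLogs_face j 1) ?_
  -- connectedness of the rim
  have hface : ∀ (i : ι) (c : unitInterval),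
      IsPreconnected {x : ι → unitInterval | x j = 1 ∧ x i = c} := by
    intro i c
    by_cases hij : i = j
    · subst hij
      by_cases hc : c = 1
      · subst hc
        have : {x : ι → unitInterval | x i = 1 ∧ x i = 1} =
            (fun x : ι → unitInterval => Function.update x i 1) '' Set.univ := by
          ext x
          constructor
          · rintro ⟨h, -⟩
            refine ⟨x, trivial, ?_⟩
            show Function.update x i 1 = x
            rw [← h]; simp
          · rintro ⟨y, -, rfl⟩
            simp
        rw [this]
        exact isPreconnected_univ.image _ (by fun_prop)
      · have : {x : ι → unitInterval | x i = 1 ∧ x i = c} = ∅ := by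
          ext x
          simp only [Set.mem_ofPred_eq, Set.mem_empty_iff_false, iff_false]
          rintro ⟨h1, h2⟩
          exact hc (h2.symm.trans h1)
        rw [this]; exact isPreconnected_empty
    · have : {x : ι → unitInterval | x j = 1 ∧ x i = c} =
            (fun x : ι → unitInterval => Function.update (Function.update x i c) j 1) '' Set.univ := by
        ext x
        constructor
        · rintro ⟨h1, h2⟩
          refine ⟨x, trivial, ?_⟩
          show Function.update (Function.update x i c) j 1 = x
          rw [← h2, Function.update_eq_self, ← h1, Function.update_eq_self]
        · rintro ⟨y, -, rfl⟩
          simp [Function.update_of_ne hij]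
      rw [this]
      exact isPreconnected_univ.image _ (by fun_prop)
  let e : ι → unitInterval := Function.update 0 j 1
  refine isPreconnected_of_forall e ?_
  rintro y ⟨hy, hy1⟩
  have hy1' : y j = 1 := hy1
  obtain ⟨i, hij, hyi⟩ : ∃ i, i ≠ j ∧ (y i = 0 ∨ y i = 1) := by
    rcases hy with h | h
    · rw [hy1'] at h; exact (one_ne_zero h).elim
    · exact h
  obtain ⟨l, hl⟩ : ∃ l, l ∉ ({i, j} : Finset ι) := by
    by_contra hc
    push Not at hc
    have h1 : Finset.univ ⊆ ({i, j} : Finset ι) := fun x _ => hc x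
    have h2 := Finset.card_le_card h1
    have h3 := Finset.card_le_two (a := i) (b := j)
    rw [Finset.card_univ] at h2
    omega
  simp only [Finset.mem_insert, Finset.mem_singleton, not_or] at hl
  let p : ι → unitInterval := Function.update e i (y i)
  refine ⟨{x | x j = 1 ∧ x i = y i} ∪ {x | x j = 1 ∧ x l = 0}, ?_, Or.inr ?_, Or.inl ⟨hy1', rfl⟩,
    IsPreconnected.union p ?_ ?_ (hface _ _) (hface _ _)⟩
  · rintro x (⟨h1, h2⟩ | ⟨h1, h2⟩)
    · exact ⟨Or.inr ⟨i, hij, by rw [h2]; exact hyi⟩, h1⟩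
    · exact ⟨Or.inr ⟨l, hl.2, Or.inl h2⟩, h1⟩
  · simp [e, Function.update_of_ne hl.2]
  · simp [p, e, Function.update_of_ne (Ne.symm hij)]
  · simp [p, e, Function.update_of_ne (Ne.symm hij), Function.update_of_ne hl.1,
      Function.update_of_ne hl.2]


/-! ### Combinatorics of the fan -/

lemma zr_injective {n : ℕ} : Function.Injective (zr : (Fin n → ℤ) → (Fin n → ℝ)) := by
  intro a b h
  funext i
  have := congr_fun h i
  simpa [zr] using this

lemma coneIdx_singleton {n r : ℕ} (N : Fin r → Fin n → ℤ) (k : Fin r) :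
    coneIdx N {k} = ray (zr (N k)) := by
  ext x
  constructor
  · rintro ⟨lam, h0, hx⟩
    exact ⟨lam k, h0 k, by simpa using hx⟩
  · rintro ⟨t, ht, hx⟩
    exact ⟨fun _ => t, fun _ => ht, by simpa using hx⟩

lemma singleton_mem_KC {n r : ℕ} {F : Fan n} {N : Fin r → Fin n → ℤ} (hPG : IsPrimGens F N)
    (k : Fin r) : ({k} : Finset (Fin r)) ∈ KC F N := by
  show coneIdx N {k} ∈ F.cones
  rw [coneIdx_singleton]
  exact hPG.ray_mem k

lemma generic_mem_UK {n r : ℕ} {F : Fan n} {N : Fin r → Fin n → ℤ} (hPG : IsPrimGens F N)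
    (x : Fin r → ℂ) (hx : ∀ i j, i ≠ j → x i ≠ 0 ∨ x j ≠ 0) : x ∈ UK (KC F N) := by
  rw [mem_UK]
  intro σ hσ
  by_contra hc
  push Not at hc
  apply hσ
  rcases σ.eq_empty_or_nonempty with rfl | ⟨i, hi⟩
  · exact empty_mem_KC F N
  · have : σ = {i} := by
      ext j
      rw [Finset.mem_singleton]
      constructor
      · intro hj
        by_contra hne
        rcases hx j i hne with h | h
        · exact h (hc j hj)
        · exact h (hc i hi)
      · rintro rfl; exact hi
    rw [this]
    exact singleton_mem_KC hPG i

lemma isOpen_UK {r : ℕ} (K : Set (Finset (Fin r))) : IsOpen (UK K) := by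
  unfold UK
  rw [isOpen_compl_iff]
  refine Set.Finite.isClosed_biUnion (Set.toFinite _) fun σ _ => ?_
  have : LSub σ = ⋂ i ∈ σ, {x : Fin r → ℂ | x i = 0} := by
    ext x; simp [LSub]
  rw [this]
  exact isClosed_biInter fun i _ => isClosed_eq (by fun_prop) (by fun_prop)

lemma zero_set_mem {r : ℕ} {K : Set (Finset (Fin r))} {x : Fin r → ℂ} (hx : x ∈ UK K) :
    (Finset.univ.filter fun i => x i = 0) ∈ K := by
  by_contra h
  obtain ⟨i, hi, hne⟩ := mem_UK.1 hx _ h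
  exact hne (by simpa using hi)

lemma cone_basis {n r : ℕ} {F : Fan n} {N : Fin r → Fin n → ℤ}
    (hPG : IsPrimGens F N) (hNS : F.NonSingular) {σ : Finset (Fin r)} (hσ : σ ∈ KC F N) :
    ∃ b : Module.Basis (Fin n) ℤ (Fin n → ℤ), ∀ i ∈ σ, ∃ l, N i = b l := by
  obtain ⟨b, s, hb⟩ := hNS _ hσ
  refine ⟨b, fun i hi => ?_⟩
  have hsub : ray (zr (N i)) ⊆ coneIdx N σ := by
    rintro x ⟨t, ht, rfl⟩
    refine ⟨fun j => if j = i then t else 0, fun j => by dsimp only; split_ifs <;> simp [ht], ?_⟩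
    rw [Finset.sum_eq_single i]
    · simp
    · intro j _ hj; simp [hj]
    · intro h; exact (h hi).elim
  obtain ⟨L, hL0, hL⟩ := F.inter_face _ hσ _ (hPG.ray_mem i)
  rw [Set.inter_eq_right.2 hsub] at hL
  have hNi : zr (N i) ∈ ray (zr (N i)) := ⟨1, zero_le_one, by simp⟩
  have hNi' := hNi
  rw [hL] at hNi'
  obtain ⟨hNc, hNL⟩ := hNi'
  rw [hb] at hNc
  obtain ⟨lam, hlam, he⟩ := hNc
  have hbmem : ∀ l ∈ s, zr (b l) ∈ coneIdx N σ := by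
    intro l hl
    rw [hb]
    refine ⟨fun j => if j = l then 1 else 0, fun j => by dsimp only; split_ifs <;> simp, ?_⟩
    rw [Finset.sum_eq_single l]
    · simp
    · intro j _ hj; simp [hj]
    · intro h; exact (h hl).elim
  have hsum : ∑ l ∈ s, lam l * L (zr (b l)) = 0 := by
    have h1 : L (zr (N i)) = 0 := hNL
    rw [he, map_sum] at h1
    simpa using h1
  have hterm := (Finset.sum_eq_zero_iff_of_nonneg
    (fun l hl => mul_nonneg (hlam l) (hL0 _ (hbmem l hl)))).1 hsum
  obtain ⟨l, hl, hlne⟩ : ∃ l ∈ s, lam l ≠ 0 := by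
    by_contra hc
    push Not at hc
    have : zr (N i) = 0 := by
      rw [he]
      exact Finset.sum_eq_zero fun l hl => by rw [hc l hl, zero_smul]
    apply hPG.ne_zero i
    apply zr_injective
    rw [this]
    funext j; simp [zr]
  have hLb : L (zr (b l)) = 0 := (mul_eq_zero.1 (hterm l hl)).resolve_left hlne
  have hbr : zr (b l) ∈ ray (zr (N i)) := by
    rw [hL]; exact ⟨hbmem l hl, hLb⟩
  have hprim : zr (b l) ∈ ray (zr (N i)) ∩ {x | IsLatticePoint x} :=
    ⟨hbr, fun j => ⟨b l j, rfl⟩⟩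
  rw [hPG.primitive] at hprim
  obtain ⟨c, hc⟩ := hprim
  have hbc : b l = (c : ℤ) • N i := by
    apply zr_injective
    rw [hc]
    funext j
    simp [zr]
  have h1 : (1 : ℤ) = (c : ℤ) * b.repr (N i) l := by
    have := congrArg (fun v => b.repr v l) hbc
    simpa only [map_smul, Finsupp.smul_apply, Module.Basis.repr_self, Finsupp.single_eq_same,
      smul_eq_mul] using this
  have hc1 : (c : ℤ) = 1 := by
    have hdvd : (c : ℤ) ∣ 1 := ⟨_, h1⟩
    exact Int.eq_one_of_dvd_one (by positivity) hdvd
  exact ⟨l, by rw [hbc, hc1, one_smul]⟩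

lemma exists_split {n r : ℕ} {F : Fan n} {N : Fin r → Fin n → ℤ}
    (hPG : IsPrimGens F N) (hNS : F.NonSingular) (h2 : Cond2 N)
    {σ : Finset (Fin r)} (hσ : σ ∈ KC F N) :
    ∃ (P : Fin r → Fin r → ℤ) (C : Fin r → Fin n → ℤ),
      (∀ k ∈ σ, ∀ j, P j k = 0) ∧ (∀ k l, ∑ j, P j k * N j l = 0) ∧
      ∀ j k, P j k = (if j = k then 1 else 0) - ∑ l, N k l * C j l := by
  obtain ⟨b, hb⟩ := cone_basis hPG hNS hσ
  let A := Fintype.linearCombination ℤ N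
  have hA : ∀ v, ∃ w, A w = v := by
    intro v
    have : v ∈ LinearMap.range A := by
      rw [Fintype.range_linearCombination]
      rw [show Submodule.span ℤ (Set.range N) = ⊤ from h2]; trivial
    exact this
  have hAs : ∀ i, A (Pi.single i 1) = N i := fun i => by
    simp [A, Fintype.linearCombination_apply_single]
  have hw : ∀ l, ∃ w, A w = b l ∧ ∀ i ∈ σ, N i = b l → w = Pi.single i 1 := by
    intro l
    by_cases h : ∃ i ∈ σ, N i = b l
    · obtain ⟨i, hi, hil⟩ := h
      refine ⟨Pi.single i 1, by rw [hAs, hil], fun j _ hjl => ?_⟩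
      rw [hPG.inj (hil.trans hjl.symm)]
    · obtain ⟨w, hw⟩ := hA (b l)
      exact ⟨w, hw, fun i hi hil => (h ⟨i, hi, hil⟩).elim⟩
  choose w hw1 hw2 using hw
  let B := b.constr ℤ w
  have hAB : ∀ v, A (B v) = v := by
    intro v
    have : A ∘ₗ B = LinearMap.id := by
      apply b.ext
      intro l
      simp [B, hw1]
    exact LinearMap.congr_fun this v
  have hBN : ∀ i ∈ σ, B (N i) = Pi.single i 1 := by
    intro i hi
    obtain ⟨l, hl⟩ := hb i hi
    rw [hl]
    simp only [B, Module.Basis.constr_basis]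
    exact hw2 l i hi hl
  refine ⟨fun j k => (Pi.single k (1 : ℤ) - B (N k) : Fin r → ℤ) j, fun j l => B (Pi.single l 1) j,
    ?_, ?_, ?_⟩
  · intro k hk j
    show (Pi.single k (1 : ℤ) - B (N k) : Fin r → ℤ) j = 0
    rw [hBN k hk, sub_self]; rfl
  · intro k l
    have h0 : A (Pi.single k (1 : ℤ) - B (N k)) = 0 := by
      rw [map_sub, hAs, hAB, sub_self]
    have := congr_fun h0 l
    simpa [A, Fintype.linearCombination_apply, Finset.sum_apply] using this
  · intro j k
    have h := LinearMap.pi_apply_eq_sum_univ B (N k)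
    have h' := congr_fun h j
    simp only [Finset.sum_apply, Pi.smul_apply, smul_eq_mul] at h'
    show (Pi.single k (1 : ℤ) - B (N k) : Fin r → ℤ) j = _
    rw [Pi.sub_apply, h', Pi.single_apply]
    congr 1
    refine Finset.sum_congr rfl fun l _ => ?_
    have hl : (fun j => if l = j then (1 : ℤ) else 0) = Pi.single l 1 := by
      funext j; simp [Pi.single_apply, eq_comm]
    rw [hl]


/-! ### The principal bundle `U(K) → X` -/

/-- The lattice splittings which provide local sections. -/
def Splits {n r : ℕ} (N : Fin r → Fin n → ℤ) (K : Set (Finset (Fin r))) : Prop :=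
  ∀ σ ∈ K, ∃ (P : Fin r → Fin r → ℤ) (C : Fin r → Fin n → ℤ),
      (∀ k ∈ σ, ∀ j, P j k = 0) ∧ (∀ k l, ∑ j, P j k * N j l = 0) ∧
      ∀ j k, P j k = (if j = k then 1 else 0) - ∑ l, N k l * C j l

/-- The monomial map with exponent matrix `P`. -/
def monoMap {r : ℕ} (P : Fin r → Fin r → ℤ) (x : Fin r → ℂ) : Fin r → ℂ :=
  fun j => ∏ k, x k ^ P j k

lemma prod_zpow_sum {ι : Type*} (s : Finset ι) (a : ℂ) (ha : a ≠ 0) (f : ι → ℤ) :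
    ∏ i ∈ s, a ^ f i = a ^ ∑ i ∈ s, f i := by
  induction s using Finset.induction_on with
  | empty => simp
  | insert i s hi ih => rw [Finset.prod_insert hi, Finset.sum_insert hi, zpow_add₀ ha, ih]

section G
variable {n r : ℕ} {N : Fin r → Fin n → ℤ}

lemma G_one : (fun _ => 1 : Fin r → ℂ) ∈ GSet N := ⟨fun _ => one_ne_zero, fun m => by simp⟩

lemma G_mul {μ ν : Fin r → ℂ} (hμ : μ ∈ GSet N) (hν : ν ∈ GSet N) :
    (fun i => μ i * ν i) ∈ GSet N := by
  refine ⟨fun k => mul_ne_zero (hμ.1 k) (hν.1 k), fun m => ?_⟩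
  simp only [mul_zpow]
  rw [Finset.prod_mul_distrib, hμ.2 m, hν.2 m, one_mul]

lemma G_inv {μ : Fin r → ℂ} (hμ : μ ∈ GSet N) : (fun i => (μ i)⁻¹) ∈ GSet N := by
  refine ⟨fun k => inv_ne_zero (hμ.1 k), fun m => ?_⟩
  simp only [inv_zpow]
  rw [Finset.prod_inv_distrib, hμ.2 m, inv_one]

lemma monoMap_mul (P : Fin r → Fin r → ℤ) (μ x : Fin r → ℂ) (j : Fin r) :
    monoMap P (fun i => μ i * x i) j = monoMap P μ j * monoMap P x j := by
  simp only [monoMap, mul_zpow, Finset.prod_mul_distrib]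

lemma monoMap_G {P : Fin r → Fin r → ℤ} {C : Fin r → Fin n → ℤ}
    (hP : ∀ j k, P j k = (if j = k then 1 else 0) - ∑ l, N k l * C j l)
    {μ : Fin r → ℂ} (hμ : μ ∈ GSet N) (j : Fin r) : monoMap P μ j = μ j := by
  have h1 : ∀ k, μ k ^ P j k =
      μ k ^ (if j = k then (1 : ℤ) else 0) / μ k ^ (∑ l, N k l * C j l) := fun k => by
    rw [hP, zpow_sub₀ (hμ.1 k)]
  simp only [monoMap, h1]
  rw [Finset.prod_div_distrib, hμ.2 (C j), div_one, Finset.prod_eq_single j]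
  · simp
  · intro k _ hk; simp [Ne.symm hk]
  · simp

lemma monoMap_mem_G {σ : Finset (Fin r)} {P : Fin r → Fin r → ℤ}
    (h0 : ∀ k ∈ σ, ∀ j, P j k = 0) (hP : ∀ k l, ∑ j, P j k * N j l = 0)
    {x : Fin r → ℂ} (hx : ∀ k ∉ σ, x k ≠ 0) : monoMap P x ∈ GSet N := by
  refine ⟨fun j => ?_, fun m => ?_⟩
  · refine Finset.prod_ne_zero_iff.2 fun k _ => ?_
    by_cases hk : k ∈ σ
    · simp [h0 k hk]
    · exact zpow_ne_zero _ (hx k hk)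
  · simp only [monoMap]
    have h1 : ∀ j, (∏ k, x k ^ P j k) ^ (∑ l, N j l * m l) =
        ∏ k, x k ^ (P j k * ∑ l, N j l * m l) := fun j => by
      rw [← Finset.prod_zpow]
      exact Finset.prod_congr rfl fun k _ => (zpow_mul _ _ _).symm
    simp only [h1]
    rw [Finset.prod_comm]
    refine Finset.prod_eq_one fun k _ => ?_
    by_cases hk : k ∈ σ
    · simp [h0 k hk]
    · rw [prod_zpow_sum _ _ (hx k hk)]
      have : ∑ j, P j k * ∑ l, N j l * m l = 0 := by
        simp only [Finset.mul_sum]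
        rw [Finset.sum_comm]
        refine Finset.sum_eq_zero fun l _ => ?_
        have := congrArg (· * m l) (hP k l)
        simp only [Finset.sum_mul, zero_mul] at this
        rw [← this]
        exact Finset.sum_congr rfl fun j _ => by ring
      rw [this, zpow_zero]

lemma continuousAt_monoMap {σ : Finset (Fin r)} {P : Fin r → Fin r → ℤ}
    (h0 : ∀ k ∈ σ, ∀ j, P j k = 0) {x : Fin r → ℂ} (hx : ∀ k ∉ σ, x k ≠ 0) :
    ContinuousAt (monoMap P) x := by
  rw [continuousAt_pi]
  intro j
  unfold monoMap
  refine tendsto_finsetProd _ fun k _ => ?_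
  refine ContinuousAt.zpow₀ (continuous_apply k).continuousAt _ ?_
  by_cases hk : k ∈ σ
  · right; rw [h0 k hk]
  · left; exact hx k hk

end G

section bundle
variable {n r : ℕ} {N : Fin r → Fin n → ℤ} {K : Set (Finset (Fin r))}

lemma mul_mem_UK {μ x : Fin r → ℂ} (hμ : ∀ k, μ k ≠ 0) (hx : x ∈ UK K) :
    (fun i => μ i * x i) ∈ UK K := by
  rw [mem_UK] at hx ⊢
  intro σ hσ
  obtain ⟨i, hi, hne⟩ := hx σ hσ
  exact ⟨i, hi, mul_ne_zero (hμ i) hne⟩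

/-- The torus action on `U(K)` (with junk values when some coordinate vanishes). -/
def act (μ : Fin r → ℂ) (x : UK K) : UK K :=
  if h : (fun i => μ i * (x : Fin r → ℂ) i) ∈ UK K then ⟨_, h⟩ else x

lemma act_val {μ : Fin r → ℂ} (hμ : ∀ k, μ k ≠ 0) (x : UK K) :
    (act μ x : Fin r → ℂ) = fun i => μ i * (x : Fin r → ℂ) i := by
  unfold act
  rw [dif_pos (mul_mem_UK hμ x.2)]

lemma continuousOn_act {Y : Type*} [TopologicalSpace Y] {S : Set Y} {δ : Y → Fin r → ℂ}
    {F : Y → UK K} (hδ : ContinuousOn δ S) (hδ0 : ∀ y ∈ S, ∀ k, δ y k ≠ 0)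
    (hF : ContinuousOn F S) : ContinuousOn (fun y => act (δ y) (F y)) S := by
  rw [Topology.IsInducing.subtypeVal.continuousOn_iff]
  have h1 : ContinuousOn (fun y => fun i => δ y i * (F y : Fin r → ℂ) i) S := by
    rw [continuousOn_pi]
    intro i
    have h2 : ContinuousOn (fun y => (F y : Fin r → ℂ)) S :=
      continuous_subtype_val.comp_continuousOn hF
    exact ((continuousOn_pi.1 hδ) i).mul ((continuousOn_pi.1 h2) i)
  refine h1.congr fun y hy => ?_
  exact act_val (hδ0 y hy) _

lemma toricRel_equiv : Equivalence (toricRel N K) where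
  refl x := ⟨_, G_one, by funext i; simp⟩
  symm := by
    rintro x y ⟨μ, hμ, h⟩
    refine ⟨_, G_inv hμ, ?_⟩
    rw [← h]
    funext i
    have := hμ.1 i
    field_simp
  trans := by
    rintro x y z ⟨μ, hμ, h⟩ ⟨ν, hν, h'⟩
    refine ⟨_, G_mul hν hμ, ?_⟩
    rw [← h', ← h]
    funext i
    ring

lemma qmap_eq_iff {x y : UK K} : qmap N K x = qmap N K y ↔ toricRel N K x y :=
  toricRel_equiv.quot_mk_eq_iff x y

lemma qmap_act {μ : Fin r → ℂ} (hμ : μ ∈ GSet N) (x : UK K) :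
    qmap N K (act μ x) = qmap N K x :=
  (qmap_eq_iff.2 ⟨μ, hμ, (act_val hμ.1 x).symm⟩).symm

lemma continuous_act {μ : Fin r → ℂ} (hμ : ∀ k, μ k ≠ 0) : Continuous (act (K := K) μ) := by
  rw [← continuousOn_univ]
  exact continuousOn_act continuousOn_const (fun _ _ => hμ) continuousOn_id

lemma isOpenMap_qmap : IsOpenMap (qmap N K) := by
  intro W hW
  have hq : Topology.IsQuotientMap (qmap N K) := isQuotientMap_quot_mk
  rw [← hq.isOpen_preimage]
  have : qmap N K ⁻¹' (qmap N K '' W) = ⋃ μ ∈ GSet N, act (K := K) μ ⁻¹' W := by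
    ext x
    simp only [Set.mem_preimage, Set.mem_image, Set.mem_iUnion, exists_prop]
    constructor
    · rintro ⟨y, hy, h⟩
      obtain ⟨μ, hμ, h'⟩ := qmap_eq_iff.1 h.symm
      refine ⟨μ, hμ, ?_⟩
      have : act μ x = y := Subtype.ext (by rw [act_val hμ.1, h'])
      rwa [this]
    · rintro ⟨μ, hμ, h⟩
      exact ⟨_, h, qmap_act hμ x⟩
  rw [this]
  exact isOpen_biUnion fun μ hμ => hW.preimage (continuous_act hμ.1)

lemma act_eq_of {μ : Fin r → ℂ} (hμ : ∀ k, μ k ≠ 0) {x y : UK K}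
    (h : (fun i => μ i * (x : Fin r → ℂ) i) = (y : Fin r → ℂ)) : act μ x = y :=
  Subtype.ext (by rw [act_val hμ, h])

lemma local_section (hs : Splits N K) (p : XS N K) :
    ∃ (V : Set (XS N K)) (s : XS N K → UK K), IsOpen V ∧ p ∈ V ∧ ContinuousOn s V ∧
      ∀ y ∈ V, qmap N K (s y) = y := by
  obtain ⟨x0, rfl⟩ : ∃ x, qmap N K x = p := Quot.exists_rep p
  obtain ⟨P, C, h0, hP, hC⟩ := hs _ (zero_set_mem x0.2)
  set σ := Finset.univ.filter fun i => (x0 : Fin r → ℂ) i = 0 with hσ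
  let W : Set (UK K) := {x | ∀ k ∉ σ, (x : Fin r → ℂ) k ≠ 0}
  have hW : IsOpen W := by
    have : W = ⋂ k ∈ {k | k ∉ σ}, {x : UK K | (x : Fin r → ℂ) k ≠ 0} := by
      ext x; simp [W]
    rw [this]
    refine Set.Finite.isOpen_biInter (Set.toFinite _) fun k _ => ?_
    exact isOpen_ne_fun ((continuous_apply k).comp continuous_subtype_val) continuous_const
  have hsat : ∀ x y, qmap N K x = qmap N K y → x ∈ W → y ∈ W := by
    intro x y hxy hx k hk
    obtain ⟨μ, hμ, h⟩ := qmap_eq_iff.1 hxy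
    rw [← h]
    exact mul_ne_zero (hμ.1 k) (hx k hk)
  have hpre : qmap N K ⁻¹' (qmap N K '' W) = W := by
    ext y
    constructor
    · rintro ⟨x, hx, h⟩
      exact hsat x y h hx
    · intro hy; exact ⟨y, hy, rfl⟩
  let t : UK K → UK K := fun x => act (fun i => (monoMap P x i)⁻¹) x
  have hG : ∀ x ∈ W, (fun i => (monoMap P (x : Fin r → ℂ) i)⁻¹) ∈ GSet N := fun x hx =>
    G_inv (monoMap_mem_G h0 hP hx)
  have htinv : ∀ x y, x ∈ W → qmap N K x = qmap N K y → t x = t y := by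
    intro x y hx hxy
    have hy := hsat x y hxy hx
    obtain ⟨μ, hμ, h⟩ := qmap_eq_iff.1 hxy
    refine Subtype.ext ?_
    simp only [t]
    rw [act_val (hG x hx).1, act_val (hG y hy).1, ← h]
    funext i
    rw [monoMap_mul, monoMap_G hC hμ]
    have := hμ.1 i
    field_simp
  have htc : ContinuousOn t W := by
    refine continuousOn_act ?_ (fun y hy => (hG y hy).1) continuousOn_id
    rw [continuousOn_pi]
    intro i
    refine ContinuousOn.inv₀ ?_ (fun x hx => (monoMap_mem_G h0 hP hx).1 i)
    intro x hx
    have hx' : ∀ k ∉ σ, (x : Fin r → ℂ) k ≠ 0 := hx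
    have h1 := (continuousAt_pi.1 (continuousAt_monoMap h0 hx')) i
    exact (ContinuousAt.comp (f := fun x : UK K => (x : Fin r → ℂ)) h1
      continuous_subtype_val.continuousAt).continuousWithinAt
  have hrep : ∀ y : XS N K, ∃ x, qmap N K x = y := Quot.exists_rep
  choose rep hrep using hrep
  refine ⟨qmap N K '' W, fun y => t (rep y), isOpenMap_qmap _ hW, ⟨x0, ?_, rfl⟩, ?_, ?_⟩
  · intro k hk
    simpa [hσ] using hk
  · have hq : Topology.IsQuotientMap (qmap N K) := isQuotientMap_quot_mk
    rw [hq.continuousOn_isOpen_iff (isOpenMap_qmap _ hW), hpre]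
    refine htc.congr fun x hx => ?_
    exact (htinv x _ hx (hrep _).symm).symm
  · rintro y ⟨x, hx, rfl⟩
    have : rep (qmap N K x) ∈ W := hsat x _ (hrep _).symm hx
    simp only [t]
    rw [qmap_act (hG _ this), hrep]

lemma difference (hs : Splits N K) {Y : Type*} [TopologicalSpace Y] {S : Set Y}
    {F₁ F₂ : Y → UK K} (h1 : ContinuousOn F₁ S) (h2 : ContinuousOn F₂ S)
    (h : ∀ y ∈ S, qmap N K (F₁ y) = qmap N K (F₂ y)) :
    ∃ δ : Y → Fin r → ℂ, ContinuousOn δ S ∧ ∀ y ∈ S, δ y ∈ GSet N ∧ act (δ y) (F₁ y) = F₂ y := by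
  have hex : ∀ y, ∃ μ : Fin r → ℂ, y ∈ S → μ ∈ GSet N ∧
      (fun i => μ i * (F₁ y : Fin r → ℂ) i) = (F₂ y : Fin r → ℂ) := by
    intro y
    by_cases hy : y ∈ S
    · obtain ⟨μ, hμ, h'⟩ := qmap_eq_iff.1 (h y hy)
      exact ⟨μ, fun _ => ⟨hμ, h'⟩⟩
    · exact ⟨0, fun h => (hy h).elim⟩
  choose δ hδ using hex
  refine ⟨δ, ?_, fun y hy => ⟨(hδ y hy).1, act_eq_of (hδ y hy).1.1 (hδ y hy).2⟩⟩
  intro y hy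
  obtain ⟨P, C, h0, hP, hC⟩ := hs _ (zero_set_mem (F₁ y).2)
  set σ := Finset.univ.filter fun i => (F₁ y : Fin r → ℂ) i = 0 with hσ
  have hv1 : ContinuousWithinAt (fun y => (F₁ y : Fin r → ℂ)) S y :=
    continuous_subtype_val.continuousAt.comp_continuousWithinAt (h1 y hy)
  have hv2 : ContinuousWithinAt (fun y => (F₂ y : Fin r → ℂ)) S y :=
    continuous_subtype_val.continuousAt.comp_continuousWithinAt (h2 y hy)
  have hn1 : ∀ k ∉ σ, (F₁ y : Fin r → ℂ) k ≠ 0 := fun k hk => by simpa [hσ] using hk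
  have hn2 : ∀ k ∉ σ, (F₂ y : Fin r → ℂ) k ≠ 0 := fun k hk => by
    rw [← (hδ y hy).2]
    exact mul_ne_zero ((hδ y hy).1.1 k) (hn1 k hk)
  have hev : ∀ᶠ x in nhdsWithin y S, ∀ k ∉ σ, (F₁ x : Fin r → ℂ) k ≠ 0 := by
    rw [Filter.eventually_all]
    intro k
    by_cases hk : k ∈ σ
    · exact Filter.Eventually.of_forall fun x h => (h hk).elim
    · have := (continuousWithinAt_pi.1 hv1 k).eventually_ne (hn1 k hk)
      exact this.mono fun x hx _ => hx
  rw [continuousWithinAt_pi]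
  intro j
  have hc1 := (continuousAt_pi.1 (continuousAt_monoMap h0 hn1)) j
  have hc2 := (continuousAt_pi.1 (continuousAt_monoMap h0 hn2)) j
  have hcd : ContinuousWithinAt
      (fun x => monoMap P (F₂ x) j / monoMap P (F₁ x) j) S y :=
    (ContinuousAt.comp_continuousWithinAt (f := fun x => (F₂ x : Fin r → ℂ)) hc2 hv2).div
      (ContinuousAt.comp_continuousWithinAt (f := fun x => (F₁ x : Fin r → ℂ)) hc1 hv1)
      ((monoMap_mem_G h0 hP hn1).1 j)
  have key : ∀ x ∈ S, (∀ k ∉ σ, (F₁ x : Fin r → ℂ) k ≠ 0) →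
      δ x j = monoMap P (F₂ x) j / monoMap P (F₁ x) j := by
    intro x hx hxn
    rw [← (hδ x hx).2, monoMap_mul, monoMap_G hC (hδ x hx).1]
    have := (monoMap_mem_G h0 hP hxn).1 j
    field_simp
  refine hcd.congr_of_eventuallyEq ?_ (key y hy hn1)
  filter_upwards [hev, self_mem_nhdsWithin] with x hx hxS
  exact key x hxS hx

end bundle


/-! ### Lifting along `q` -/

lemma glue_on {Y Z : Type*} [TopologicalSpace Y] [TopologicalSpace Z] {A B : Set Y}
    (hA : IsClosed A) (hB : IsClosed B) {f g : Y → Z} (hf : ContinuousOn f A)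
    (hg : ContinuousOn g B) (h : ∀ x ∈ A, x ∈ B → f x = g x) :
    ContinuousOn (fun x => if x ∈ A then f x else g x) (A ∪ B) := by
  refine ContinuousOn.union_of_isClosed ?_ ?_ hA hB
  · exact hf.congr fun x hx => by simp [hx]
  · refine hg.congr fun x hx => ?_
    by_cases hxA : x ∈ A
    · simp [hxA, h x hxA hx]
    · simp [hxA]

section lift
variable {n r : ℕ} {N : Fin r → Fin n → ℤ} {K : Set (Finset (Fin r))}

lemma lift_box (hs : Splits N K) {ι : Type} [Fintype ι] (f : (ι → ℝ) → XS N K)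
    (hf : Continuous f) {ε : ℝ}
    (hε : ∀ a b : ι → ℝ, 0 ≤ a → b ≤ 1 → (∀ i, b i - a i ≤ ε) →
      ∃ F : (ι → ℝ) → UK K, ContinuousOn F (Set.Icc a b) ∧
        ∀ x ∈ Set.Icc a b, qmap N K (F x) = f x) (M : ℕ) :
    ∀ c : ι → ℕ, ∑ i, c i = M → ∀ a b : ι → ℝ, 0 ≤ a → b ≤ 1 →
      (∀ i, b i - a i ≤ ε * 2 ^ c i) →
      ∃ F : (ι → ℝ) → UK K, ContinuousOn F (Set.Icc a b) ∧
        ∀ x ∈ Set.Icc a b, qmap N K (F x) = f x := by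
  induction M with
  | zero =>
    intro c hc a b ha hb h
    refine hε a b ha hb fun i => ?_
    have : c i = 0 := by
      have := (Finset.sum_eq_zero_iff.1 hc) i (Finset.mem_univ i)
      exact this
    have h' := h i
    rw [this] at h'
    simpa using h'
  | succ M ih =>
    intro c hc a b ha hb h
    by_cases hab : a ≤ b
    swap
    · have hemp : Set.Icc a b = ∅ := Set.Icc_eq_empty hab
      obtain ⟨x0, -⟩ : ∃ x, qmap N K x = f 0 := Quot.exists_rep _
      refine ⟨fun _ => x0, ?_, ?_⟩
      · exact continuousOn_const
      · rw [hemp]; intro x hx; exact hx.elim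
    obtain ⟨i, hi⟩ : ∃ i, c i ≠ 0 := by
      by_contra hne
      push Not at hne
      simp [hne] at hc
    set c' := Function.update c i (c i - 1) with hc'
    have hsum : ∑ j, c' j = M := by
      have h1 := Finset.add_sum_erase Finset.univ c (Finset.mem_univ i)
      have h2 := Finset.add_sum_erase Finset.univ c' (Finset.mem_univ i)
      have h3 : ∑ j ∈ Finset.univ.erase i, c' j = ∑ j ∈ Finset.univ.erase i, c j :=
        Finset.sum_congr rfl fun j hj => by
          simp [hc', Finset.ne_of_mem_erase hj]
      have h4 : c' i = c i - 1 := by simp [hc']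
      omega
    set m := (a i + b i) / 2 with hm
    have hai : a i ≤ b i := hab i
    have hpow : ε * 2 ^ c i = 2 * (ε * 2 ^ (c i - 1)) := by
      obtain ⟨k, hk⟩ := Nat.exists_eq_succ_of_ne_zero hi
      rw [hk]; simp [pow_succ]; ring
    have hi' := h i
    obtain ⟨F1, hF1, hq1⟩ := ih c' hsum a (Function.update b i m) ha
      (by
        intro j
        by_cases hj : j = i
        · subst hj; simp only [Function.update_self]
          have := hb j
          simp only [Pi.one_apply] at this ⊢
          linarith
        · simp only [Function.update_of_ne hj]; exact hb j)
      (by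
        intro j
        by_cases hj : j = i
        · subst hj; simp only [Function.update_self, hc']
          linarith
        · simp only [Function.update_of_ne hj, hc']; exact h j)
    obtain ⟨F2, hF2, hq2⟩ := ih c' hsum (Function.update a i m) b
      (by
        intro j
        by_cases hj : j = i
        · subst hj; simp only [Function.update_self]
          have := ha j
          simp only [Pi.zero_apply] at this ⊢
          linarith
        · simp only [Function.update_of_ne hj]; exact ha j) hb
      (by
        intro j
        by_cases hj : j = i
        · subst hj; simp only [Function.update_self, hc']
          linarith
        · simp only [Function.update_of_ne hj, hc']; exact h j)
    set B1 := Set.Icc a (Function.update b i m) with hB1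
    set B2 := Set.Icc (Function.update a i m) b with hB2
    have mB1 : ∀ x, x ∈ B1 ↔ x ∈ Set.Icc a b ∧ x i ≤ m := by
      intro x
      simp only [hB1, Set.mem_Icc]
      constructor
      · rintro ⟨h1, h2⟩
        refine ⟨⟨h1, fun j => ?_⟩, by simpa using h2 i⟩
        by_cases hj : j = i
        · subst hj; have := h2 j; simp only [Function.update_self] at this; linarith
        · have := h2 j; simpa only [Function.update_of_ne hj] using this
      · rintro ⟨⟨h1, h2⟩, h3⟩
        refine ⟨h1, fun j => ?_⟩
        by_cases hj : j = i
        · subst hj; simpa using h3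
        · simpa only [Function.update_of_ne hj] using h2 j
    have mB2 : ∀ x, x ∈ B2 ↔ x ∈ Set.Icc a b ∧ m ≤ x i := by
      intro x
      simp only [hB2, Set.mem_Icc]
      constructor
      · rintro ⟨h1, h2⟩
        refine ⟨⟨fun j => ?_, h2⟩, by simpa using h1 i⟩
        by_cases hj : j = i
        · subst hj; have := h1 j; simp only [Function.update_self] at this; linarith
        · have := h1 j; simpa only [Function.update_of_ne hj] using this
      · rintro ⟨⟨h1, h2⟩, h3⟩
        refine ⟨fun j => ?_, h2⟩
        by_cases hj : j = i
        · subst hj; simpa using h3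
        · simpa only [Function.update_of_ne hj] using h1 j
    have hW : ∀ x ∈ Set.Icc a b, Function.update x i m ∈ B1 ∩ B2 := by
      rintro x ⟨h1, h2⟩
      have : Function.update x i m ∈ Set.Icc a b := by
        constructor
        · intro j
          by_cases hj : j = i
          · subst hj; simp only [Function.update_self]; linarith
          · simpa only [Function.update_of_ne hj] using h1 j
        · intro j
          by_cases hj : j = i
          · subst hj; simp only [Function.update_self]; linarith
          · simpa only [Function.update_of_ne hj] using h2 j
      exact ⟨(mB1 _).2 ⟨this, by simp⟩, (mB2 _).2 ⟨this, by simp⟩⟩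
    obtain ⟨δ, hδ, hδ'⟩ := difference hs (hF2.mono (Set.inter_subset_right (s := B1)))
      (hF1.mono (Set.inter_subset_left (t := B2)))
      (fun y hy => by rw [hq1 y hy.1, hq2 y hy.2])
    have hsub : B1 ∪ B2 = Set.Icc a b := by
      ext x
      simp only [Set.mem_union, mB1, mB2]
      rcases le_total (x i) m with h | h <;> tauto
    have hr : ContinuousOn (fun x : ι → ℝ => δ (Function.update x i m)) (Set.Icc a b) := by
      refine hδ.comp (t := B1 ∩ B2) (f := fun x : ι → ℝ => Function.update x i m) ?_ hW
      exact (continuous_id.update i continuous_const).continuousOn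
    have hB2s : B2 ⊆ Set.Icc a b := fun x hx => ((mB2 x).1 hx).1
    have hG := glue_on (A := B1) (B := B2) isClosed_Icc isClosed_Icc hF1
      (g := fun x => act (δ (Function.update x i m)) (F2 x))
      (continuousOn_act (hr.mono hB2s) (fun y hy => (hδ' _ (hW y (hB2s hy))).1.1) hF2)
      (by
        intro x hx1 hx2
        have : Function.update x i m = x := by
          have : x i = m := le_antisymm ((mB1 x).1 hx1).2 ((mB2 x).1 hx2).2
          rw [← this, Function.update_eq_self]
        rw [this, (hδ' x ⟨hx1, hx2⟩).2])
    rw [hsub] at hG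
    refine ⟨_, hG, ?_⟩
    intro x hx
    split_ifs with hx1
    · exact hq1 x hx1
    · have hx2 : x ∈ B2 := by
        rw [← hsub] at hx
        exact hx.resolve_left hx1
      rw [qmap_act (hδ' _ (hW x hx)).1, hq2 x hx2]

lemma lift_cube (hs : Splits N K) {ι : Type} [Fintype ι] (f : C(ι → unitInterval, XS N K)) :
    ∃ F : C(ι → unitInterval, UK K), ∀ x, qmap N K (F x) = f x := by
  have hfc : Continuous (fun x : ι → ℝ => f (cubeProj ι x)) :=
    f.continuous.comp (continuous_cubeProj ι)
  choose V s hVo hV hsc hsq using local_section hs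
  obtain ⟨ε, hε0, hε⟩ := lebesgue_number_lemma_of_metric
    (s := Set.Icc (0 : ι → ℝ) 1) (c := fun p : XS N K => (fun x : ι → ℝ => f (cubeProj ι x)) ⁻¹' V p)
    isCompact_Icc (fun p => (hVo p).preimage hfc)
    (fun x _ => Set.mem_iUnion.2 ⟨_, hV _⟩)
  have hsmall : ∀ a b : ι → ℝ, 0 ≤ a → b ≤ 1 → (∀ i, b i - a i ≤ ε / 2) →
      ∃ F : (ι → ℝ) → UK K, ContinuousOn F (Set.Icc a b) ∧
        ∀ x ∈ Set.Icc a b, qmap N K (F x) = f (cubeProj ι x) := by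
    intro a b ha hb h
    by_cases hab : a ≤ b
    · obtain ⟨p, hp⟩ := hε a ⟨ha, hab.trans hb⟩
      have hsub : ∀ x ∈ Set.Icc a b, f (cubeProj ι x) ∈ V p := by
        intro x hx
        apply hp
        rw [Metric.mem_ball]
        refine lt_of_le_of_lt ((dist_pi_le_iff (by linarith : (0 : ℝ) ≤ ε / 2)).2 fun i => ?_)
          (half_lt_self hε0)
        rw [Real.dist_eq, abs_of_nonneg (sub_nonneg.2 (hx.1 i))]
        have := hx.2 i
        have := h i
        linarith
      refine ⟨fun x => s p (f (cubeProj ι x)), (hsc p).comp hfc.continuousOn hsub, ?_⟩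
      intro x hx
      exact hsq p _ (hsub x hx)
    · obtain ⟨x0, -⟩ : ∃ x, qmap N K x = f (fun _ => 0) := Quot.exists_rep _
      refine ⟨fun _ => x0, continuousOn_const, ?_⟩
      intro x hx
      exact (hab (hx.1.trans hx.2)).elim
  obtain ⟨m, hm⟩ := pow_unbounded_of_one_lt (1 / (ε / 2)) (one_lt_two (α := ℝ))
  obtain ⟨F, hF, hq⟩ := lift_box hs _ hfc hsmall _ (fun _ => m) rfl 0 1 le_rfl le_rfl
    (fun i => by
      rw [div_lt_iff₀ (by linarith)] at hm
      simp only [Pi.one_apply, Pi.zero_apply]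
      linarith)
  have hin : ∀ x : ι → unitInterval, cubeIncl ι x ∈ Set.Icc (0 : ι → ℝ) 1 := fun x =>
    ⟨fun i => (x i).2.1, fun i => (x i).2.2⟩
  refine ⟨⟨fun x => F (cubeIncl ι x), hF.comp_continuous (continuous_cubeIncl ι) hin⟩, fun x => ?_⟩
  show qmap N K (F (cubeIncl ι x)) = _
  rw [hq _ (hin x), cubeProj_incl]

/-- Extension of maps into `G` which have logarithms. -/
lemma G_extend (hs : Splits N K) (hE : ∅ ∈ K) {Y : Type} [TopologicalSpace Y] [NormalSpace Y]
    {A : Set Y} (hA : IsClosed A) (hlog : HasLogs A) {δ : Y → Fin r → ℂ}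
    (hδ : ContinuousOn δ A) (hδG : ∀ x ∈ A, δ x ∈ GSet N) :
    ∃ Δ : Y → Fin r → ℂ, Continuous Δ ∧ (∀ x, Δ x ∈ GSet N) ∧ ∀ x ∈ A, Δ x = δ x := by
  obtain ⟨P, C, h0, hP, hC⟩ := hs _ hE
  have hz : ∀ k, ∃ z : Y → ℂ, ContinuousOn z A ∧ ∀ x ∈ A, Complex.exp (z x) = δ x k := fun k =>
    hlog _ ((continuousOn_pi.1 hδ) k) fun x hx => (hδG x hx).1 k
  choose z hzc hz using hz
  have hZ : ∀ k, ∃ Z : C(Y, ℂ), ∀ x ∈ A, Z x = z k x := by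
    intro k
    obtain ⟨Z, hZ⟩ := ContinuousMap.exists_restrict_eq hA
      (⟨A.domRestrict (z k), continuousOn_iff_continuous_domRestrict.1 (hzc k)⟩ : C(A, ℂ))
    exact ⟨Z, fun x hx => congrArg (fun g : C(A, ℂ) => g ⟨x, hx⟩) hZ⟩
  choose Z hZ using hZ
  have hne : ∀ x, ∀ k ∉ (∅ : Finset (Fin r)), (fun k => Complex.exp (Z k x)) k ≠ 0 :=
    fun x k _ => Complex.exp_ne_zero _
  refine ⟨fun x => monoMap P fun k => Complex.exp (Z k x), ?_, fun x => ?_, fun x hx => ?_⟩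
  · rw [continuous_iff_continuousAt]
    intro x
    have hc : Continuous fun x => fun k => Complex.exp (Z k x) :=
      continuous_pi fun k => Complex.continuous_exp.comp (Z k).continuous
    exact ContinuousAt.comp (f := fun x => fun k => Complex.exp (Z k x))
      (continuousAt_monoMap h0 (hne x)) hc.continuousAt
  · exact monoMap_mem_G h0 hP (hne x)
  · have : (fun k => Complex.exp (Z k x)) = δ x := by
      funext k; rw [hZ k x hx, hz k x hx]
    dsimp only
    rw [this]
    funext j
    exact monoMap_G hC (hδG x hx) j

lemma lift_rel (hs : Splits N K) (hE : ∅ ∈ K) {ι : Type} [Fintype ι]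
    (f : C(ι → unitInterval, XS N K))
    {A : Set (ι → unitInterval)} (hA : IsClosed A) (hlog : HasLogs A)
    {g : (ι → unitInterval) → UK K} (hg : ContinuousOn g A)
    (hq : ∀ x ∈ A, qmap N K (g x) = f x) :
    ∃ F : C(ι → unitInterval, UK K), (∀ x, qmap N K (F x) = f x) ∧ ∀ x ∈ A, F x = g x := by
  obtain ⟨F0, hF0⟩ := lift_cube hs f
  obtain ⟨δ, hδ, hδ'⟩ := difference hs (S := A) F0.continuous.continuousOn hg
    (fun y hy => by rw [hF0, hq y hy])
  obtain ⟨Δ, hΔ, hΔG, hΔδ⟩ := G_extend hs hE hA hlog hδ (fun x hx => (hδ' x hx).1)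
  refine ⟨⟨fun x => act (Δ x) (F0 x), ?_⟩, fun x => ?_, fun x hx => ?_⟩
  · rw [← continuousOn_univ]
    exact continuousOn_act hΔ.continuousOn (fun y _ => (hΔG y).1) F0.continuous.continuousOn
  · show qmap N K (act (Δ x) (F0 x)) = _
    rw [qmap_act (hΔG x), hF0]
  · show act (Δ x) (F0 x) = _
    rw [hΔδ x hx, (hδ' x hx).2]

end lift

/-! ### The circle `ℝ ∪ {∞}` as a quotient of the interval -/

/-- The quotient map from the interval to `ℝ ∪ {∞}`. -/
def eMap (t : unitInterval) : OnePoint ℝ :=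
  if t = 0 ∨ t = 1 then OnePoint.infty
  else (((2 * (t : ℝ) - 1) / ((t : ℝ) * (1 - t)) : ℝ) : OnePoint ℝ)

@[simp] lemma eMap_zero : eMap 0 = OnePoint.infty := by simp [eMap]
@[simp] lemma eMap_one : eMap 1 = OnePoint.infty := by simp [eMap]

lemma eMap_pos {t : unitInterval} (h : ¬ (t = 0 ∨ t = 1)) : 0 < (t : ℝ) ∧ 0 < 1 - (t : ℝ) := by
  push Not at h
  constructor
  · exact lt_of_le_of_ne t.2.1 fun h' => h.1 (Subtype.ext h'.symm)
  · have : (t : ℝ) < 1 := lt_of_le_of_ne t.2.2 fun h' => h.2 (Subtype.ext h')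
    linarith

lemma eMap_ne {t : unitInterval} (h : ¬ (t = 0 ∨ t = 1)) :
    eMap t = (((2 * (t : ℝ) - 1) / ((t : ℝ) * (1 - t)) : ℝ) : OnePoint ℝ) := by
  rw [eMap, if_neg h]

lemma continuous_eMap : Continuous eMap := by
  rw [continuous_iff_continuousAt]
  intro t
  by_cases h : t = 0 ∨ t = 1
  · have hv : eMap t = OnePoint.infty := by rw [eMap, if_pos h]
    rw [ContinuousAt, hv, OnePoint.hasBasis_nhds_infty.tendsto_right_iff]
    rintro s ⟨hsc, hs⟩
    obtain ⟨R, hR⟩ := hs.isBounded.exists_norm_le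
    have hev : ∀ᶠ u : unitInterval in nhds t, R * ((u : ℝ) * (1 - u)) < |2 * (u : ℝ) - 1| := by
      refine (isOpen_lt (f := fun u : unitInterval => R * ((u : ℝ) * (1 - u)))
        (g := fun u : unitInterval => |2 * (u : ℝ) - 1|) (by fun_prop) (by fun_prop)).mem_nhds ?_
      rcases h with rfl | rfl <;> norm_num
    filter_upwards [hev] with u hu
    by_cases h' : u = 0 ∨ u = 1
    · right; simp [eMap, h']
    · left
      rw [eMap_ne h']
      refine ⟨_, ?_, rfl⟩
      intro hmem
      have hb := hR _ hmem
      obtain ⟨h1, h2⟩ := eMap_pos h'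
      have h3 : 0 < (u : ℝ) * (1 - u) := mul_pos h1 h2
      rw [Real.norm_eq_abs, abs_div, abs_of_pos h3, div_le_iff₀ h3] at hb
      linarith
  · have hev : ∀ᶠ u : unitInterval in nhds t, ¬ (u = 0 ∨ u = 1) := by
      push Not at h
      filter_upwards [isOpen_ne.mem_nhds h.1, isOpen_ne.mem_nhds h.2] with u h1 h2
      simp only [not_or]; exact ⟨h1, h2⟩
    obtain ⟨h1, h2⟩ := eMap_pos h
    have hc : ContinuousAt (fun u : unitInterval =>
        (((2 * (u : ℝ) - 1) / ((u : ℝ) * (1 - u)) : ℝ) : OnePoint ℝ)) t := by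
      refine OnePoint.continuous_coe.continuousAt.comp (f := fun u : unitInterval =>
        (2 * (u : ℝ) - 1) / ((u : ℝ) * (1 - u))) ?_
      exact ContinuousAt.div (by fun_prop) (by fun_prop) (mul_pos h1 h2).ne'
    refine hc.congr ?_
    filter_upwards [hev] with u hu
    exact (eMap_ne hu).symm

lemma eMap_inj {s t : unitInterval} (h : eMap s = eMap t) :
    s = t ∨ ((s = 0 ∨ s = 1) ∧ (t = 0 ∨ t = 1)) := by
  by_cases hs : s = 0 ∨ s = 1
  · by_cases ht : t = 0 ∨ t = 1
    · exact Or.inr ⟨hs, ht⟩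
    · rw [eMap_ne ht, eMap, if_pos hs] at h
      exact (OnePoint.infty_ne_coe _ h).elim
  · by_cases ht : t = 0 ∨ t = 1
    · rw [eMap_ne hs, eMap, if_pos ht] at h
      exact (OnePoint.coe_ne_infty _ h).elim
    · left
      rw [eMap_ne hs, eMap_ne ht, OnePoint.coe_eq_coe] at h
      obtain ⟨h1, h2⟩ := eMap_pos hs
      obtain ⟨h3, h4⟩ := eMap_pos ht
      apply Subtype.ext
      rw [div_eq_div_iff (mul_pos h1 h2).ne' (mul_pos h3 h4).ne'] at h
      have key : ((s : ℝ) - t) * ((1 - (s : ℝ)) * (1 - t) + s * t) = 0 := by linarith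
      have hp : 0 < (1 - (s : ℝ)) * (1 - t) + s * t := by
        have := mul_pos h2 h4
        have := mul_pos h1 h3
        linarith
      rcases mul_eq_zero.1 key with h | h
      · linarith
      · exact (hp.ne' h).elim

lemma eMap_surj : Function.Surjective eMap := by
  intro u
  induction u using OnePoint.rec with
  | infty => exact ⟨0, eMap_zero⟩
  | coe y =>
    have hc : ContinuousOn (fun t : ℝ => 2 * t - 1 - y * (t * (1 - t))) (Set.Icc 0 1) := by fun_prop
    obtain ⟨t, ht, h⟩ := intermediate_value_Icc (zero_le_one (α := ℝ)) hc
      (show (0 : ℝ) ∈ _ by constructor <;> norm_num)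
    dsimp only at h
    refine ⟨⟨t, ht⟩, ?_⟩
    have hne : ¬ ((⟨t, ht⟩ : unitInterval) = 0 ∨ (⟨t, ht⟩ : unitInterval) = 1) := by
      rintro (h' | h')
      · have : t = 0 := congrArg Subtype.val h'
        rw [this] at h; norm_num at h
      · have : t = 1 := congrArg Subtype.val h'
        rw [this] at h; norm_num at h
    rw [eMap_ne hne, OnePoint.coe_eq_coe]
    obtain ⟨h1, h2⟩ := eMap_pos hne
    rw [div_eq_iff (mul_pos h1 h2).ne']
    dsimp only
    linarith

lemma loop_at {Z : Type*} [TopologicalSpace Z] {z0 : Z} (γ : Loop Z z0) {t : unitInterval}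
    (h : t = 0 ∨ t = 1) : γ.1 (eMap t) = z0 := by
  rcases h with rfl | rfl
  · rw [eMap_zero]; exact γ.2
  · rw [eMap_one]; exact γ.2

lemma loop_ext {Z : Type*} [TopologicalSpace Z] {z0 : Z} {γ γ' : Loop Z z0}
    (h : ∀ t, γ.1 (eMap t) = γ'.1 (eMap t)) : γ = γ' := by
  apply Subtype.ext
  ext u
  obtain ⟨t, rfl⟩ := eMap_surj u
  exact h t

lemma loop_uncurry {Y Z : Type*} [TopologicalSpace Y] [TopologicalSpace Z] {z0 : Z}
    {p : Y → Loop Z z0} (hp : Continuous p) {φ : Y → unitInterval} (hφ : Continuous φ) :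
    Continuous fun y => (p y).1 (eMap (φ y)) := by
  have h1 : Continuous fun y => (p y).1 := continuous_subtype_val.comp hp
  exact h1.eval (continuous_eMap.comp hφ)

lemma loop_curry {Y Z : Type*} [TopologicalSpace Y] [TopologicalSpace Z] {z0 : Z}
    (h : C(Y × unitInterval, Z)) (hb : ∀ y t, (t = 0 ∨ t = 1) → h (y, t) = z0) :
    ∃ p : C(Y, Loop Z z0), ∀ y t, (p y).1 (eMap t) = h (y, t) := by
  obtain ⟨sec, hsec⟩ := eMap_surj.hasRightInverse
  have hprop : IsProperMap eMap := continuous_eMap.isProperMap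
  have hq : Topology.IsQuotientMap (Prod.map (id : Y → Y) eMap) :=
    (isProperMap_id.prodMap hprop).isClosedMap.isQuotientMap
      (continuous_id.prodMap continuous_eMap)
      (Function.surjective_id.prodMap eMap_surj)
  have hval : ∀ y t, h (y, sec (eMap t)) = h (y, t) := by
    intro y t
    rcases eMap_inj (hsec (eMap t)) with h' | ⟨h1, h2⟩
    · rw [h']
    · rw [hb y _ h1, hb y _ h2]
  have hc : Continuous fun x : Y × OnePoint ℝ => h (x.1, sec x.2) := by
    rw [hq.continuous_iff]
    have : ((fun x : Y × OnePoint ℝ => h (x.1, sec x.2)) ∘ Prod.map id eMap) = h := by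
      funext ⟨y, t⟩
      exact hval y t
    rw [this]
    exact h.continuous
  let H : C(Y × OnePoint ℝ, Z) := ⟨_, hc⟩
  refine ⟨⟨fun y => ⟨H.curry y, ?_⟩, ?_⟩, fun y t => ?_⟩
  · show h (y, sec OnePoint.infty) = z0
    rw [← eMap_zero, hval, hb y 0 (Or.inl rfl)]
  · exact Continuous.subtype_mk H.curry.continuous _
  · exact hval y t

/-! ### Extension and lifting for loop spaces -/

lemma loop_curry_on {κ : Type} {Z : Type*} [TopologicalSpace Z] {z0 : Z}
    (G : C(Option κ → unitInterval, Z))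
    (hG : ∀ x, (x none = 0 ∨ x none = 1) → G x = z0) :
    ∃ p : C(κ → unitInterval, Loop Z z0), ∀ y t,
      (p y).1 (eMap t) = G (fun o => o.elim t y) := by
  have hc : Continuous fun x : (κ → unitInterval) × unitInterval =>
      (fun o : Option κ => o.elim x.2 x.1) := by
    refine continuous_pi fun o => ?_
    cases o with
    | none => exact continuous_snd
    | some i => exact (continuous_apply i).comp continuous_fst
  exact loop_curry ⟨fun x => G (fun o => o.elim x.2 x.1), G.continuous.comp hc⟩
    (fun y t ht => hG _ ht)

lemma glue_ex {Y Z : Type*} [TopologicalSpace Y] [TopologicalSpace Z] {A B : Set Y}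
    (hA : IsClosed A) (hB : IsClosed B) {f g : Y → Z} (hf : ContinuousOn f A)
    (hg : ContinuousOn g B) (h : ∀ x ∈ A, x ∈ B → f x = g x) :
    ∃ φ : Y → Z, ContinuousOn φ (A ∪ B) ∧ (∀ x ∈ A, φ x = f x) ∧ ∀ x ∈ B, φ x = g x := by
  refine ⟨_, glue_on hA hB hf hg h, fun x hx => if_pos hx, fun x hx => ?_⟩
  split_ifs with hx'
  · exact h x hx' hx
  · rfl

lemma loop_data {κ : Type} {Z : Type*} [TopologicalSpace Z] {z0 : Z}
    {A : Set (κ → unitInterval)} (hA : IsClosed A)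
    {g : (κ → unitInterval) → Loop Z z0} (hg : ContinuousOn g A) :
    IsClosed ({x : Option κ → unitInterval | x none = 0 ∨ x none = 1} ∪
      {x | (fun i => x (some i)) ∈ A}) ∧
    ∃ φ : (Option κ → unitInterval) → Z,
      ContinuousOn φ ({x | x none = 0 ∨ x none = 1} ∪ {x | (fun i => x (some i)) ∈ A}) ∧
      (∀ x, (x none = 0 ∨ x none = 1) → φ x = z0) ∧
      ∀ x, (fun i => x (some i)) ∈ A → φ x = (g fun i => x (some i)).1 (eMap (x none)) := by
  have h1 : IsClosed {x : Option κ → unitInterval | x none = 0 ∨ x none = 1} :=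
    (isClosed_eq (continuous_apply _) continuous_const).union
      (isClosed_eq (continuous_apply _) continuous_const)
  have hr : Continuous fun (x : Option κ → unitInterval) (i : κ) => x (some i) :=
    continuous_pi fun i => continuous_apply _
  have h2 : IsClosed {x : Option κ → unitInterval | (fun i => x (some i)) ∈ A} :=
    hA.preimage hr
  have h3 : ContinuousOn (fun x : Option κ → unitInterval => (g fun i => x (some i)).1)
      {x | (fun i => x (some i)) ∈ A} :=
    continuous_subtype_val.comp_continuousOn (hg.comp hr.continuousOn fun x hx => hx)
  have h4 : Continuous fun x : Option κ → unitInterval => eMap (x none) :=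
    continuous_eMap.comp (continuous_apply _)
  refine ⟨h1.union h2, ?_⟩
  exact glue_ex h1 h2 (f := fun _ => z0)
    (g := fun x => (g fun i => x (some i)).1 (eMap (x none))) continuousOn_const
    ((continuous_eval (F := C(OnePoint ℝ, Z))).comp_continuousOn
      (h3.prodMk h4.continuousOn)) (fun x hx _ => (loop_at _ hx).symm)

lemma boundary_option {κ : Type} {x : Option κ → unitInterval} (hx : x ∈ Cube.boundary (Option κ)) :
    x ∈ ({x : Option κ → unitInterval | x none = 0 ∨ x none = 1} ∪
      {x | (fun i => x (some i)) ∈ Cube.boundary κ}) := by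
  obtain ⟨o, ho⟩ := hx
  cases o with
  | none => exact Or.inl ho
  | some i => exact Or.inr ⟨i, ho⟩

section loops
variable {n r : ℕ} {N : Fin r → Fin n → ℤ} {K : Set (Finset (Fin r))}

lemma loop_extend (hE : ∅ ∈ K) (hU : IsOpen (UK K))
    (hV : ∀ x : Fin r → ℂ, (∀ i j, i ≠ j → x i ≠ 0 ∨ x j ≠ 0) → x ∈ UK K)
    {κ : Type} [Fintype κ] (hκ : Fintype.card κ ≤ 2)
    {A : Set (κ → unitInterval)} (hA : IsClosed A)
    {g : (κ → unitInterval) → Loop (UK K) (onesUK hE)} (hg : ContinuousOn g A) :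
    ∃ p : C(κ → unitInterval, Loop (UK K) (onesUK hE)), ∀ y ∈ A, p y = g y := by
  obtain ⟨h2, φ, h1, hφ0, hφ⟩ := loop_data hA hg
  obtain ⟨G, hG⟩ := ext_cube (ι := Option κ) (by rw [Fintype.card_option]; omega) _ hU hV _ h2 _ h1
  obtain ⟨p, hp⟩ := loop_curry_on (z0 := onesUK hE) G (fun x hx => by
    rw [hG x (Or.inl hx), hφ0 x hx])
  refine ⟨p, fun y hy => loop_ext fun t => ?_⟩
  rw [hp, hG _ (Or.inr hy)]
  exact hφ _ hy

lemma loop_lift (hs : Splits N K) (hE : ∅ ∈ K) {κ : Type} [Fintype κ]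
    (hκ : 2 ≤ Fintype.card κ) (f : C(κ → unitInterval, Loop (XS N K) (baseX N K hE)))
    {g : (κ → unitInterval) → Loop (UK K) (onesUK hE)} (hg : ContinuousOn g (Cube.boundary κ))
    (hq : ∀ y ∈ Cube.boundary κ, loopMap (qCont N K) rfl (g y) = f y) :
    ∃ p : C(κ → unitInterval, Loop (UK K) (onesUK hE)),
      (∀ y, loopMap (qCont N K) rfl (p y) = f y) ∧ ∀ y ∈ Cube.boundary κ, p y = g y := by
  obtain ⟨-, φ, h1, hφ0, hφ⟩ := loop_data (isClosed_boundary κ) hg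
  have hr : Continuous fun (x : Option κ → unitInterval) (i : κ) => x (some i) :=
    continuous_pi fun i => continuous_apply _
  obtain ⟨G, hG, hGA⟩ := lift_rel hs hE (ι := Option κ)
    ⟨fun x => (f fun i => x (some i)).1 (eMap (x none)),
      loop_uncurry (f.continuous.comp hr) (continuous_apply none)⟩
    (isClosed_boundary _) (hasLogs_boundary (by rw [Fintype.card_option]; omega))
    (h1.mono fun x hx => boundary_option hx)
    (by
      intro x hx
      show _ = (f fun i => x (some i)).1 (eMap (x none))
      rcases boundary_option hx with h | h
      · rw [hφ0 x h]; exact (loop_at _ h).symm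
      · rw [hφ x h, ← hq _ h]
        rfl)
  obtain ⟨p, hp⟩ := loop_curry_on (z0 := onesUK hE) G (fun x hx => by
    rw [hGA x ⟨none, hx⟩, hφ0 x hx])
  refine ⟨p, fun y => loop_ext fun t => ?_, fun y hy => loop_ext fun t => ?_⟩
  · show qmap N K ((p y).1 (eMap t)) = _
    rw [hp, hG]
    rfl
  · obtain ⟨i, hi⟩ := hy
    rw [hp, hGA _ ⟨some i, hi⟩]
    exact hφ _ ⟨i, hi⟩

lemma loop_pathConnected (hE : ∅ ∈ K) (hU : IsOpen (UK K))
    (hV : ∀ x : Fin r → ℂ, (∀ i j, i ≠ j → x i ≠ 0 ∨ x j ≠ 0) → x ∈ UK K) :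
    PathConnectedSpace (Loop (UK K) (onesUK hE)) := by
  refine ⟨⟨Loop.const _⟩, fun γ0 γ1 => ?_⟩
  have hcl : ∀ c : unitInterval, IsClosed {x : Fin 1 → unitInterval | x 0 = c} :=
    fun c => isClosed_eq (continuous_apply _) continuous_const
  obtain ⟨φ, hc, hφ0, hφ1⟩ := glue_ex (hcl 0) (hcl 1) (f := fun _ => γ0) (g := fun _ => γ1)
    continuousOn_const continuousOn_const (by
      intro x h0 h1
      exact (zero_ne_one (h0.symm.trans h1)).elim)
  obtain ⟨p, hp⟩ := loop_extend hE hU hV (κ := Fin 1) (by simp) ((hcl 0).union (hcl 1)) hc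
  have hcc : Continuous fun (t : unitInterval) (_ : Fin 1) => t := by fun_prop
  refine ⟨⟨⟨fun t => p fun _ => t, p.continuous.comp hcc⟩, ?_, ?_⟩⟩
  · show p _ = _
    rw [hp _ (Or.inl rfl), hφ0 _ rfl]
  · show p _ = _
    rw [hp _ (Or.inr rfl), hφ1 _ rfl]

lemma loop_simplyConnected (hE : ∅ ∈ K) (hU : IsOpen (UK K))
    (hV : ∀ x : Fin r → ℂ, (∀ i j, i ≠ j → x i ≠ 0 ∨ x j ≠ 0) → x ∈ UK K) :
    SimplyConnectedSpace (Loop (UK K) (onesUK hE)) := by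
  rw [simply_connected_iff_paths_homotopic']
  refine ⟨loop_pathConnected hE hU hV, ?_⟩
  intro γ0 γ1 p q
  let A3 : Set (Fin 2 → unitInterval) := {x | x 1 = 0} ∪ {x | x 1 = 1}
  have hcl : ∀ (i : Fin 2) (c : unitInterval), IsClosed {x : Fin 2 → unitInterval | x i = c} :=
    fun i c => isClosed_eq (continuous_apply _) continuous_const
  have hA3 : IsClosed A3 := (hcl 1 0).union (hcl 1 1)
  obtain ⟨φ, hc, hφ0, hφ1⟩ := glue_ex (A := {x : Fin 2 → unitInterval | x 0 = 0} ∪ A3)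
    (B := {x : Fin 2 → unitInterval | x 0 = 1} ∪ A3) ((hcl 0 0).union hA3) ((hcl 0 1).union hA3)
    (f := fun x => p (x 1)) (g := fun x => q (x 1))
    (p.continuous.comp (continuous_apply 1)).continuousOn
    (q.continuous.comp (continuous_apply 1)).continuousOn
    (by
      have hA : ∀ x ∈ A3, p (x 1) = q (x 1) := by
        rintro x (h | h)
        · have h : x 1 = 0 := h
          simp [h]
        · have h : x 1 = 1 := h
          simp [h]
      rintro x (h0 | h0) (h1 | h1)
      · exact (zero_ne_one (h0.symm.trans h1)).elim
      all_goals first | exact hA x h0 | exact hA x h1)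
  obtain ⟨P, hP⟩ := loop_extend hE hU hV (κ := Fin 2) (by simp)
    (((hcl 0 0).union hA3).union ((hcl 0 1).union hA3)) hc
  have hP0 : ∀ x : Fin 2 → unitInterval, x ∈ ({x | x 0 = 0} ∪ A3 : Set _) → P x = p (x 1) := by
    intro x hx
    rw [hP x (Or.inl hx), hφ0 _ hx]
  have hP1 : ∀ x : Fin 2 → unitInterval, x 0 = 1 → P x = q (x 1) := by
    intro x hx
    rw [hP x (Or.inr (Or.inl hx)), hφ1 _ (Or.inl hx)]
  have hcc : Continuous fun x : unitInterval × unitInterval => (![x.1, x.2] : Fin 2 → unitInterval) := by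
    refine continuous_pi fun i => ?_
    fin_cases i
    · exact continuous_fst
    · exact continuous_snd
  refine ⟨{ toFun := fun x => P ![x.1, x.2], continuous_toFun := P.continuous.comp hcc,
            map_zero_left := fun t => ?_, map_one_left := fun t => ?_, prop' := ?_ }⟩
  · exact hP0 _ (Or.inl rfl)
  · exact hP1 _ rfl
  · intro s t ht
    refine hP0 _ (Or.inr ?_)
    rcases ht with h | h
    · left; exact h
    · right; exact h

lemma piMap_bijective (hs : Splits N K) (hE : ∅ ∈ K) (γ : Loop (UK K) (onesUK hE)) (k : ℕ)
    (hk : 2 ≤ k) :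
    Function.Bijective (piMap k (loopMap (x₀ := onesUK hE) (qCont N K) rfl) γ) := by
  constructor
  · intro a b hab
    induction a using Quotient.inductionOn with | _ p0 => ?_
    induction b using Quotient.inductionOn with | _ p1 => ?_
    obtain ⟨H⟩ : GenLoop.Homotopic _ _ := Quotient.exact hab
    apply Quotient.sound
    let A3 : Set (Fin (k + 1) → unitInterval) := {x | Fin.tail x ∈ Cube.boundary (Fin k)}
    have hcl : ∀ (i : Fin (k + 1)) (c : unitInterval),
        IsClosed {x : Fin (k + 1) → unitInterval | x i = c} :=
      fun i c => isClosed_eq (continuous_apply _) continuous_const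
    have htail : Continuous fun x : Fin (k + 1) → unitInterval => Fin.tail x :=
      continuous_pi fun i => continuous_apply _
    have hA3 : IsClosed A3 := (isClosed_boundary _).preimage htail
    have hagree : ∀ x ∈ A3, p0 (Fin.tail x) = p1 (Fin.tail x) := by
      intro x hx
      exact (p0.2 _ hx).trans (p1.2 _ hx).symm
    obtain ⟨φ, hc, hφ0, hφ1⟩ := glue_ex (A := {x : Fin (k + 1) → unitInterval | x 0 = 0} ∪ A3)
      (B := {x : Fin (k + 1) → unitInterval | x 0 = 1} ∪ A3)
      ((hcl 0 0).union hA3) ((hcl 0 1).union hA3)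
      (f := fun x => p0 (Fin.tail x)) (g := fun x => p1 (Fin.tail x))
      (p0.1.continuous.comp htail).continuousOn (p1.1.continuous.comp htail).continuousOn
      (by
        rintro x (h0 | h0) (h1 | h1)
        · exact (zero_ne_one (h0.symm.trans h1)).elim
        all_goals first | exact hagree x h0 | exact hagree x h1)
    have hsub : Cube.boundary (Fin (k + 1)) ⊆
        ({x : Fin (k + 1) → unitInterval | x 0 = 0} ∪ A3) ∪
        ({x : Fin (k + 1) → unitInterval | x 0 = 1} ∪ A3) := by
      rintro x ⟨i, hi⟩
      induction i using Fin.cases with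
      | zero =>
        rcases hi with h | h
        · exact Or.inl (Or.inl h)
        · exact Or.inr (Or.inl h)
      | succ i => exact Or.inl (Or.inr ⟨i, hi⟩)
    obtain ⟨P, hPq, hPb⟩ := loop_lift hs hE (κ := Fin (k + 1)) (by simp; omega)
      ⟨fun x => H (x 0, Fin.tail x), H.continuous.comp ((continuous_apply 0).prodMk htail)⟩
      (hc.mono hsub)
      (by
        intro x hx
        show _ = H (x 0, Fin.tail x)
        have hH : ∀ x ∈ A3, H (x 0, Fin.tail x) = loopMap (qCont N K) rfl (p0 (Fin.tail x)) := by
          intro x hx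
          exact H.eq_fst (x 0) hx
        rcases hsub hx with h | h
        · rw [hφ0 x h]
          rcases h with h | h
          · have h : x 0 = 0 := h
            rw [h, H.apply_zero]; rfl
          · exact (hH x h).symm
        · rw [hφ1 x h]
          rcases h with h | h
          · have h : x 0 = 1 := h
            rw [h, H.apply_one]; rfl
          · rw [hH x h, hagree x h])
    have hcons : Continuous fun x : unitInterval × (Fin k → unitInterval) =>
        (Fin.cons x.1 x.2 : Fin (k + 1) → unitInterval) := by
      refine continuous_pi fun i => ?_
      induction i using Fin.cases with
      | zero => exact continuous_fst
      | succ i => exact (continuous_apply i).comp continuous_snd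
    refine ⟨{ toFun := fun x => P (Fin.cons x.1 x.2),
              continuous_toFun := P.continuous.comp hcons,
              map_zero_left := fun y => ?_, map_one_left := fun y => ?_, prop' := ?_ }⟩
    · show P _ = _
      rw [hPb _ ⟨0, Or.inl rfl⟩, hφ0 _ (Or.inl rfl)]; rfl
    · show P _ = _
      rw [hPb _ ⟨0, Or.inr rfl⟩, hφ1 _ (Or.inl rfl)]; rfl
    · intro s y hy
      show P _ = _
      obtain ⟨i, hi⟩ := hy
      have hm : (Fin.cons s y : Fin (k + 1) → unitInterval) ∈ A3 := ⟨i, hi⟩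
      rw [hPb _ ⟨i.succ, hi⟩, hφ0 _ (Or.inr hm)]; rfl
  · intro b
    induction b using Quotient.inductionOn with | _ f => ?_
    obtain ⟨P, hPq, hPb⟩ := loop_lift hs hE (κ := Fin k) (by simpa using hk) f.1
      (g := fun _ => γ) continuousOn_const (fun y hy => (f.2 y hy).symm)
    refine ⟨Quotient.mk _ ⟨P, hPb⟩, ?_⟩
    refine congrArg (Quotient.mk _) (Subtype.ext ?_)
    ext1 y
    exact hPq y

end loops

/-! ### Degrees of two-dimensional loops -/

section deg
variable {n r : ℕ} {N : Fin r → Fin n → ℤ} {K : Set (Finset (Fin r))}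

lemma base_fiber {hE : ∅ ∈ K} {y : UK K} (h : qmap N K y = baseX N K hE) :
    (y : Fin r → ℂ) ∈ GSet N := by
  obtain ⟨μ, hμ, h'⟩ := qmap_eq_iff.1 h.symm
  have : (y : Fin r → ℂ) = μ := by
    rw [← h']; funext i
    show μ i * 1 = μ i
    rw [mul_one]
  rw [this]; exact hμ

lemma base_of_G (hE : ∅ ∈ K) {y : UK K} (h : (y : Fin r → ℂ) ∈ GSet N) :
    qmap N K y = baseX N K hE := by
  refine (qmap_eq_iff.2 ⟨_, h, ?_⟩).symm
  funext i
  show (y : Fin r → ℂ) i * 1 = _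
  rw [mul_one]

lemma exp_prod (w : Fin r → ℂ) (a : Fin r → ℤ) :
    ∏ k, Complex.exp (w k) ^ a k = Complex.exp (∑ k, (a k : ℂ) * w k) := by
  rw [Complex.exp_sum]
  exact Finset.prod_congr rfl fun k _ => (Complex.exp_int_mul _ _).symm

lemma exp_mem_G {w : Fin r → ℂ} (h : ∀ l, ∑ k, (N k l : ℂ) * w k = 0) :
    (fun k => Complex.exp (w k)) ∈ GSet N := by
  refine ⟨fun k => Complex.exp_ne_zero _, fun m => ?_⟩
  rw [exp_prod]
  have : ∑ k, ((∑ j, N k j * m j : ℤ) : ℂ) * w k = 0 := by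
    push_cast
    simp only [Finset.sum_mul]
    rw [Finset.sum_comm]
    refine Finset.sum_eq_zero fun l _ => ?_
    have h' := congrArg ((m l : ℂ) * ·) (h l)
    simp only [Finset.mul_sum, mul_zero] at h'
    rw [← h']
    exact Finset.sum_congr rfl fun k _ => by ring
  rw [this, Complex.exp_zero]

lemma z_ker {z : unitInterval → Fin r → ℂ} (hz : Continuous z) (h0 : z 0 = 0)
    (hG : ∀ u, (fun k => Complex.exp (z u k)) ∈ GSet N) (u : unitInterval) (l : Fin n) :
    ∑ k, (N k l : ℂ) * z u k = 0 := by
  have hc : Continuous fun u => ∑ k, (N k l : ℂ) * z u k :=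
    continuous_finsetSum _ fun k _ => continuous_const.mul ((continuous_apply k).comp hz)
  have := log_unique (isPreconnected_univ (α := unitInterval))
    (z := fun u => ∑ k, (N k l : ℂ) * z u k) (w := fun _ => 0) hc.continuousOn
    continuousOn_const (by
      intro u _
      have h := (hG u).2 (Pi.single l 1)
      have hs : ∀ k, ∑ j, N k j * (Pi.single l 1 : Fin n → ℤ) j = N k l := fun k => by
        simp [Pi.single_apply]
      simp only [hs] at h
      rw [exp_prod] at h
      rw [h, Complex.exp_zero]) (Set.mem_univ u) (Set.mem_univ 0)
  simpa [h0] using this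

/-- `d` is the degree of the two-dimensional loop `F`. -/
def IsDeg {n r : ℕ} (N : Fin r → Fin n → ℤ) (K : Set (Finset (Fin r))) (hE : ∅ ∈ K)
    (F : (Fin 2 → unitInterval) → XS N K) (d : Fin r → ℤ) : Prop :=
  ∃ (L : C(Fin 2 → unitInterval, UK K)) (z : unitInterval → Fin r → ℂ),
    (∀ x, qmap N K (L x) = F x) ∧ (∀ x ∈ openBox (1 : Fin 2), L x = onesUK hE) ∧
    Continuous z ∧ z 0 = 0 ∧ (∀ u k, Complex.exp (z u k) = (L ![u, 1] : Fin r → ℂ) k) ∧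
    ∀ k, z 1 k = 2 * Real.pi * Complex.I * d k

lemma continuous_vec2 {Y Z : Type*} [TopologicalSpace Y] [TopologicalSpace Z] {a b : Y → Z}
    (ha : Continuous a) (hb : Continuous b) : Continuous fun y => (![a y, b y] : Fin 2 → Z) := by
  refine continuous_pi fun i => ?_
  fin_cases i
  · exact ha
  · exact hb

lemma continuous_vec3 {Y Z : Type*} [TopologicalSpace Y] [TopologicalSpace Z] {a b c : Y → Z}
    (ha : Continuous a) (hb : Continuous b) (hc : Continuous c) :
    Continuous fun y => (![a y, b y, c y] : Fin 3 → Z) := by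
  refine continuous_pi fun i => ?_
  fin_cases i
  · exact ha
  · exact hb
  · exact hc

lemma mem_box2 {x : Fin 2 → unitInterval} :
    x ∈ openBox (1 : Fin 2) ↔ x 1 = 0 ∨ x 0 = 0 ∨ x 0 = 1 := by
  simp only [openBox, Set.mem_ofPred_eq]
  constructor
  · rintro (h | ⟨i, hi, h⟩)
    · exact Or.inl h
    · fin_cases i
      · exact Or.inr h
      · exact (hi rfl).elim
  · rintro (h | h)
    · exact Or.inl h
    · exact Or.inr ⟨0, by decide, h⟩

lemma mem_box3 {x : Fin 3 → unitInterval} :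
    x ∈ openBox (1 : Fin 3) ↔ x 1 = 0 ∨ (x 0 = 0 ∨ x 0 = 1) ∨ (x 2 = 0 ∨ x 2 = 1) := by
  simp only [openBox, Set.mem_ofPred_eq]
  constructor
  · rintro (h | ⟨i, hi, h⟩)
    · exact Or.inl h
    · fin_cases i
      · exact Or.inr (Or.inl h)
      · exact (hi rfl).elim
      · exact Or.inr (Or.inr h)
  · rintro (h | h | h)
    · exact Or.inl h
    · exact Or.inr ⟨0, by decide, h⟩
    · exact Or.inr ⟨2, by decide, h⟩

lemma box2_sub : openBox (1 : Fin 2) ⊆ Cube.boundary (Fin 2) := by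
  intro x hx
  rcases mem_box2.1 hx with h | h
  · exact ⟨1, Or.inl h⟩
  · exact ⟨0, h⟩

lemma bdry2 {x : Fin 2 → unitInterval} (hx : x ∈ Cube.boundary (Fin 2)) :
    x ∈ openBox (1 : Fin 2) ∨ x 1 = 1 := by
  obtain ⟨i, hi⟩ := hx
  fin_cases i
  · exact Or.inl (mem_box2.2 (Or.inr hi))
  · rcases hi with h | h
    · exact Or.inl (mem_box2.2 (Or.inl h))
    · exact Or.inr h

lemma exp_deg (d : ℤ) : Complex.exp (2 * Real.pi * Complex.I * d) = 1 := by
  rw [Complex.exp_eq_one_iff]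
  exact ⟨d, by ring⟩

lemma exp_top {hE : ∅ ∈ K} {F : (Fin 2 → unitInterval) → XS N K}
    (hF : ∀ x ∈ Cube.boundary (Fin 2), F x = baseX N K hE)
    {L : C(Fin 2 → unitInterval, UK K)} (hL : ∀ x, qmap N K (L x) = F x) (u : unitInterval) :
    (L ![u, 1] : Fin r → ℂ) ∈ GSet N :=
  base_fiber (hE := hE) (by rw [hL, hF _ ⟨1, Or.inr rfl⟩])

lemma deg_exists (hs : Splits N K) (hE : ∅ ∈ K) (F : C(Fin 2 → unitInterval, XS N K))
    (hF : ∀ x ∈ Cube.boundary (Fin 2), F x = baseX N K hE) : ∃ d, IsDeg N K hE F d := by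
  obtain ⟨L, hL, hLb⟩ := lift_rel hs hE F (isClosed_openBox (1 : Fin 2)) (hasLogs_openBox 1)
    (g := fun _ => onesUK hE) continuousOn_const
    (fun x hx => (hF x (box2_sub hx)).symm)
  have hlog : ∀ k, ∃ z : (Fin 1 → unitInterval) → ℂ, ContinuousOn z Set.univ ∧
      ∀ x ∈ Set.univ, Complex.exp (z x) = (L ![x 0, 1] : Fin r → ℂ) k := by
    intro k
    refine hasLogs_cube (Fin 1) _ ?_ fun x _ => (exp_top hF hL (x 0)).1 k
    have h1 : Continuous fun x : Fin 1 → unitInterval => L ![x 0, 1] :=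
      L.continuous.comp (continuous_vec2 (continuous_apply 0) continuous_const)
    exact ((continuous_apply k).comp (continuous_subtype_val.comp h1)).continuousOn
  choose z hzc hz using hlog
  have h10 : ∀ k, Complex.exp (z k fun _ => 0) = 1 := fun k => by
    rw [hz k _ trivial, hLb _ (mem_box2.2 (Or.inr (Or.inl rfl)))]; rfl
  have h11 : ∀ k, Complex.exp (z k fun _ => 1) = 1 := fun k => by
    rw [hz k _ trivial, hLb _ (mem_box2.2 (Or.inr (Or.inr rfl)))]; rfl
  have hd : ∀ k, ∃ d : ℤ, z k (fun _ => 1) - z k (fun _ => 0) = d * (2 * Real.pi * Complex.I) := by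
    intro k
    rw [← Complex.exp_eq_one_iff, Complex.exp_sub, h10, h11, div_one]
  choose d hd using hd
  refine ⟨d, L, fun u k => z k (fun _ => u) - z k (fun _ => 0), hL, hLb, ?_, ?_, ?_, ?_⟩
  · refine continuous_pi fun k => ?_
    have hc : Continuous (z k) := continuousOn_univ.1 (hzc k)
    have hcc : Continuous fun (t : unitInterval) (_ : Fin 1) => t := by fun_prop
    exact (hc.comp hcc).sub continuous_const
  · funext k; simp
  · intro u k
    rw [Complex.exp_sub, h10, div_one, hz k _ trivial]
  · intro k
    show z k (fun _ => 1) - z k (fun _ => 0) = _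
    rw [hd]; ring

lemma deg_ker (hE : ∅ ∈ K) {F : (Fin 2 → unitInterval) → XS N K}
    (hF : ∀ x ∈ Cube.boundary (Fin 2), F x = baseX N K hE) {d : Fin r → ℤ}
    (h : IsDeg N K hE F d) (l : Fin n) : ∑ k, N k l * d k = 0 := by
  obtain ⟨L, z, hL, hLb, hzc, hz0, hze, hz1⟩ := h
  have h1 := z_ker (N := N) hzc hz0 (fun u => by
    have := exp_top hF hL u
    have he : (fun k => Complex.exp (z u k)) = (L ![u, 1] : Fin r → ℂ) := funext (hze u)
    rw [he]; exact this) 1 l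
  simp only [hz1] at h1
  have h2 : (2 * Real.pi * Complex.I) * ((∑ k, N k l * d k : ℤ) : ℂ) = 0 := by
    push_cast
    rw [Finset.mul_sum, ← h1]
    exact Finset.sum_congr rfl fun k _ => by ring
  rcases mul_eq_zero.1 h2 with h | h
  · exact (Complex.two_pi_I_ne_zero h).elim
  · exact_mod_cast h

/-- Gluing two maps on the cube along the side faces. -/
lemma glue_cyl {Z : Type*} [TopologicalSpace Z] {L0 L1 : (Fin 2 → unitInterval) → Z}
    (h0 : Continuous L0) (h1 : Continuous L1)
    (h : ∀ x ∈ openBox (1 : Fin 2), L0 x = L1 x) :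
    ∃ φ : (Fin 3 → unitInterval) → Z, ContinuousOn φ (openBox 1) ∧
      (∀ x, x 2 = 0 → φ x = L0 ![x 0, x 1]) ∧ (∀ x, x 2 = 1 → φ x = L1 ![x 0, x 1]) ∧
      ∀ x, ![x 0, x 1] ∈ openBox (1 : Fin 2) → φ x = L0 ![x 0, x 1] := by
  have hr : Continuous fun x : Fin 3 → unitInterval => ![x 0, x 1] :=
    continuous_vec2 (continuous_apply 0) (continuous_apply 1)
  have hcl : ∀ c : unitInterval, IsClosed {x : Fin 3 → unitInterval | x 2 = c} :=
    fun c => isClosed_eq (continuous_apply _) continuous_const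
  let B : Set (Fin 3 → unitInterval) := {x | ![x 0, x 1] ∈ openBox (1 : Fin 2)}
  have hB : IsClosed B := (isClosed_openBox (1 : Fin 2)).preimage hr
  obtain ⟨φ, hφ, hφ0, hφ1⟩ := glue_ex ((hcl 0).union hB) ((hcl 1).union hB)
    (f := fun x => L0 ![x 0, x 1]) (g := fun x => L1 ![x 0, x 1])
    (h0.comp hr).continuousOn (h1.comp hr).continuousOn (by
      rintro x (h0 | h0) (h1 | h1)
      · exact (zero_ne_one (h0.symm.trans h1)).elim
      all_goals first | exact h _ h0 | exact h _ h1)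
  refine ⟨φ, hφ.mono ?_, fun x hx => hφ0 x (Or.inl hx), fun x hx => hφ1 x (Or.inl hx),
    fun x hx => hφ0 x (Or.inr hx)⟩
  intro x hx
  rcases mem_box3.1 hx with h | h | h | h
  · exact Or.inl (Or.inr (mem_box2.2 (Or.inl h)))
  · exact Or.inl (Or.inr (mem_box2.2 (Or.inr h)))
  · exact Or.inl (Or.inl h)
  · exact Or.inr (Or.inl h)

lemma deg_unique (hs : Splits N K) (hE : ∅ ∈ K) {F F' : C(Fin 2 → unitInterval, XS N K)}
    (hF : ∀ x ∈ Cube.boundary (Fin 2), F x = baseX N K hE)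
    (H : F.HomotopyRel F' (Cube.boundary (Fin 2))) {d d' : Fin r → ℤ}
    (h : IsDeg N K hE F d) (h' : IsDeg N K hE F' d') : d = d' := by
  obtain ⟨L, z, hL, hLb, hzc, hz0, hze, hz1⟩ := h
  obtain ⟨L', z', hL', hLb', hzc', hz0', hze', hz1'⟩ := h'
  obtain ⟨φ, hφ, hφ0, hφ1, hφb⟩ := glue_cyl L.continuous L'.continuous
    (fun x hx => by rw [hLb x hx, hLb' x hx])
  obtain ⟨M, hM, hMb⟩ := lift_rel hs hE
    ⟨fun x : Fin 3 → unitInterval => H (x 2, ![x 0, x 1]),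
      H.continuous.comp ((continuous_apply 2).prodMk
        (continuous_vec2 (continuous_apply 0) (continuous_apply 1)))⟩
    (isClosed_openBox (1 : Fin 3)) (hasLogs_openBox 1) hφ (by
      intro x hx
      show _ = H (x 2, ![x 0, x 1])
      have hbox : ![x 0, x 1] ∈ openBox (1 : Fin 2) → qmap N K (φ x) = H (x 2, ![x 0, x 1]) := by
        intro hb
        rw [hφb x hb, hL]
        exact (H.eq_fst (x 2) (box2_sub hb)).symm
      rcases mem_box3.1 hx with h | h | h | h
      · exact hbox (mem_box2.2 (Or.inl h))
      · exact hbox (mem_box2.2 (Or.inr h))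
      · rw [hφ0 x h, hL, h, H.apply_zero]
      · rw [hφ1 x h, hL', h, H.apply_one])
  have hvec : Continuous fun x : Fin 2 → unitInterval => ![x 0, 1, x 1] :=
    continuous_vec3 (continuous_apply 0) continuous_const (continuous_apply 1)
  have hside : ∀ u s, (u = 0 ∨ u = 1) → M ![u, 1, s] = onesUK hE := by
    intro u s hu
    have hb : (![u, 1] : Fin 2 → unitInterval) ∈ openBox (1 : Fin 2) :=
      mem_box2.2 (Or.inr hu)
    rw [hMb _ (mem_box3.2 (Or.inr (Or.inl hu)))]
    exact (hφb _ hb).trans (hLb _ hb)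
  have hM0 : ∀ u, M ![u, 1, 0] = L ![u, 1] := by
    intro u
    rw [hMb _ (mem_box3.2 (Or.inr (Or.inr (Or.inl rfl)))), hφ0 _ rfl]; rfl
  have hM1 : ∀ u, M ![u, 1, 1] = L' ![u, 1] := by
    intro u
    rw [hMb _ (mem_box3.2 (Or.inr (Or.inr (Or.inr rfl)))), hφ1 _ rfl]; rfl
  have hlog : ∀ k, ∃ w : (Fin 2 → unitInterval) → ℂ, ContinuousOn w Set.univ ∧
      ∀ x ∈ Set.univ, Complex.exp (w x) = (M ![x 0, 1, x 1] : Fin r → ℂ) k := by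
    intro k
    refine hasLogs_cube (Fin 2) _ ?_ fun x _ => ?_
    · exact ((continuous_apply k).comp
        (continuous_subtype_val.comp (M.continuous.comp hvec))).continuousOn
    · refine (base_fiber (N := N) (hE := hE) ?_).1 k
      rw [hM]
      have hb : (![x 0, 1] : Fin 2 → unitInterval) ∈ Cube.boundary (Fin 2) := ⟨1, Or.inr rfl⟩
      exact (H.eq_fst (x 1) hb).trans (hF _ hb)
  have key : ∀ k, z 1 k = z' 1 k := by
    intro k
    obtain ⟨w, hw, hwe⟩ := hlog k
    have hwc : Continuous w := continuousOn_univ.1 hw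
    have hcomp : ∀ {a b : unitInterval → unitInterval}, Continuous a → Continuous b →
        ContinuousOn (fun t => w ![a t, b t]) Set.univ := fun ha hb =>
      (hwc.comp (continuous_vec2 ha hb)).continuousOn
    have hexp : ∀ u s, Complex.exp (w ![u, s]) = (M ![u, 1, s] : Fin r → ℂ) k :=
      fun u s => hwe _ trivial
    have hpc : IsPreconnected (Set.univ : Set unitInterval) := isPreconnected_univ
    have hzk : ContinuousOn (fun u => z u k) Set.univ :=
      ((continuous_apply k).comp hzc).continuousOn
    have hzk' : ContinuousOn (fun u => z' u k) Set.univ :=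
      ((continuous_apply k).comp hzc').continuousOn
    have e1 := log_unique hpc (hcomp continuous_id continuous_const) hzk
      (fun u _ => by
        show Complex.exp (w ![u, 0]) = _
        rw [hexp, hze, hM0]) (Set.mem_univ (0 : unitInterval)) (Set.mem_univ 1)
    have e2 := log_unique hpc (hcomp continuous_id continuous_const) hzk'
      (fun u _ => by
        show Complex.exp (w ![u, 1]) = _
        rw [hexp, hze', hM1]) (Set.mem_univ (0 : unitInterval)) (Set.mem_univ 1)
    have e3 := log_unique hpc (hcomp (a := fun _ => 0) continuous_const continuous_id)
      (w := fun _ => 0) continuousOn_const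
      (fun u _ => by
        show Complex.exp (w ![0, u]) = _
        rw [hexp, hside _ _ (Or.inl rfl), Complex.exp_zero]; rfl)
        (Set.mem_univ (0 : unitInterval)) (Set.mem_univ 1)
    have e4 := log_unique hpc (hcomp (a := fun _ => 1) continuous_const continuous_id)
      (w := fun _ => 0) continuousOn_const
      (fun u _ => by
        show Complex.exp (w ![1, u]) = _
        rw [hexp, hside _ _ (Or.inr rfl), Complex.exp_zero]; rfl)
        (Set.mem_univ (0 : unitInterval)) (Set.mem_univ 1)
    simp only [hz0, hz0', id, Pi.zero_apply, sub_zero] at e1 e2 e3 e4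
    linear_combination e1 - e2 + e4 - e3
  funext k
  have hk := key k
  rw [hz1, hz1'] at hk
  have := mul_left_cancel₀ Complex.two_pi_I_ne_zero hk
  exact_mod_cast this

lemma deg_homotopic (hE : ∅ ∈ K) (hU : IsOpen (UK K))
    (hV : ∀ x : Fin r → ℂ, (∀ i j, i ≠ j → x i ≠ 0 ∨ x j ≠ 0) → x ∈ UK K)
    {F F' : C(Fin 2 → unitInterval, XS N K)}
    (hF : ∀ x ∈ Cube.boundary (Fin 2), F x = baseX N K hE)
    (hF' : ∀ x ∈ Cube.boundary (Fin 2), F' x = baseX N K hE) {d : Fin r → ℤ}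
    (h : IsDeg N K hE F d) (h' : IsDeg N K hE F' d) :
    F.HomotopicRel F' (Cube.boundary (Fin 2)) := by
  obtain ⟨L, z, hL, hLb, hzc, hz0, hze, hz1⟩ := h
  obtain ⟨L', z', hL', hLb', hzc', hz0', hze', hz1'⟩ := h'
  obtain ⟨φ, hφ, hφ0, hφ1, hφb⟩ := glue_cyl L.continuous L'.continuous
    (fun x hx => by rw [hLb x hx, hLb' x hx])
  have hk := fun u l => z_ker (N := N) hzc hz0 (fun u => by
    have he : (fun k => Complex.exp (z u k)) = (L ![u, 1] : Fin r → ℂ) := funext (hze u)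
    rw [he]; exact exp_top hF hL u) u l
  have hk' := fun u l => z_ker (N := N) hzc' hz0' (fun u => by
    have he : (fun k => Complex.exp (z' u k)) = (L' ![u, 1] : Fin r → ℂ) := funext (hze' u)
    rw [he]; exact exp_top hF' hL' u) u l
  let Z : (Fin 3 → unitInterval) → Fin r → ℂ := fun x k =>
    (1 - ((x 2 : ℝ) : ℂ)) * z (x 0) k + ((x 2 : ℝ) : ℂ) * z' (x 0) k
  have hZG : ∀ x, (fun k => Complex.exp (Z x k)) ∈ GSet N := by
    intro x
    refine exp_mem_G fun l => ?_
    have h1 := hk (x 0) l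
    have h2 := hk' (x 0) l
    calc ∑ k, (N k l : ℂ) * Z x k
        = (1 - ((x 2 : ℝ) : ℂ)) * ∑ k, (N k l : ℂ) * z (x 0) k +
          ((x 2 : ℝ) : ℂ) * ∑ k, (N k l : ℂ) * z' (x 0) k := by
          rw [Finset.mul_sum, Finset.mul_sum, ← Finset.sum_add_distrib]
          exact Finset.sum_congr rfl fun k _ => by simp only [Z]; ring
      _ = 0 := by rw [h1, h2]; ring
  have hZc : Continuous fun x k => Complex.exp (Z x k) := by
    refine continuous_pi fun k => Complex.continuous_exp.comp ?_
    have c1 : Continuous fun x : Fin 3 → unitInterval => z (x 0) k :=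
      (continuous_apply k).comp (hzc.comp (continuous_apply 0))
    have c2 : Continuous fun x : Fin 3 → unitInterval => z' (x 0) k :=
      (continuous_apply k).comp (hzc'.comp (continuous_apply 0))
    simp only [Z]
    fun_prop
  have hZU : ∀ x, (fun k => Complex.exp (Z x k)) ∈ UK K := fun x =>
    mem_UK.2 fun σ hσ => by
      rcases Finset.nonempty_iff_ne_empty.2
        (fun he : σ = ∅ => hσ (by rw [he]; exact hE)) with ⟨i, hi⟩
      exact ⟨i, hi, Complex.exp_ne_zero _⟩
  have hcl : IsClosed {x : Fin 3 → unitInterval | x 1 = 1} :=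
    isClosed_eq (continuous_apply _) continuous_const
  obtain ⟨ψ, hψ, hψ0, hψ1⟩ := glue_ex (isClosed_openBox (1 : Fin 3)) hcl hφ
    (g := fun x => (⟨_, hZU x⟩ : UK K)) (hZc.subtype_mk hZU).continuousOn (by
      intro x hx hx1
      have hx1 : x 1 = 1 := hx1
      apply Subtype.ext
      have hside : (x 0 = 0 ∨ x 0 = 1) → (φ x : Fin r → ℂ) = fun k => Complex.exp (Z x k) := by
        intro hx0
        have hb : (![x 0, x 1] : Fin 2 → unitInterval) ∈ openBox (1 : Fin 2) :=
          mem_box2.2 (Or.inr hx0)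
        rw [hφb x hb, hLb _ hb]
        funext k
        show (1 : ℂ) = _
        rcases hx0 with h | h
        · simp [Z, h, hz0, hz0']
        · simp only [Z, h, hz1, hz1']
          rw [← add_mul, sub_add_cancel, one_mul, exp_deg]
      rcases mem_box3.1 hx with h | h | h | h
      · exact (zero_ne_one (h.symm.trans hx1)).elim
      · exact hside h
      · rw [hφ0 x h, hx1]
        funext k
        rw [← hze]; simp [Z, h]
      · rw [hφ1 x h, hx1]
        funext k
        rw [← hze']; simp [Z, h])
  obtain ⟨M, hM⟩ := ext_cube (ι := Fin 3) (by simp) _ hU hV _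
    ((isClosed_openBox (1 : Fin 3)).union hcl) ψ hψ
  have hMb : ∀ x ∈ openBox (1 : Fin 3), M x = φ x := fun x hx => by
    rw [hM x (Or.inl hx), hψ0 x hx]
  have hqc : Continuous (qmap N K) := (qCont N K).continuous
  refine ⟨{ toFun := fun x => qmap N K (M ![x.2 0, x.2 1, x.1]),
            continuous_toFun := hqc.comp (M.continuous.comp (continuous_vec3
              ((continuous_apply 0).comp continuous_snd)
              ((continuous_apply 1).comp continuous_snd) continuous_fst)),
            map_zero_left := fun y => ?_, map_one_left := fun y => ?_, prop' := ?_ }⟩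
  · show qmap N K (M ![y 0, y 1, 0]) = F y
    rw [hMb _ (mem_box3.2 (Or.inr (Or.inr (Or.inl rfl)))), hφ0 _ rfl, hL]
    congr 1
    funext i; fin_cases i <;> rfl
  · show qmap N K (M ![y 0, y 1, 1]) = F' y
    rw [hMb _ (mem_box3.2 (Or.inr (Or.inr (Or.inr rfl)))), hφ1 _ rfl, hL']
    congr 1
    funext i; fin_cases i <;> rfl
  · intro s y hy
    show qmap N K (M ![y 0, y 1, s]) = F y
    rw [hF y hy]
    rcases bdry2 hy with hb | h1
    · have hb' : (![y 0, y 1] : Fin 2 → unitInterval) ∈ openBox (1 : Fin 2) :=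
        (mem_box2 (x := ![y 0, y 1])).2 ((mem_box2 (x := y)).1 hb)
      have hb3 : (![y 0, y 1, s] : Fin 3 → unitInterval) ∈ openBox (1 : Fin 3) := by
        rcases mem_box2.1 hb with h | h
        · exact mem_box3.2 (Or.inl h)
        · exact mem_box3.2 (Or.inr (Or.inl h))
      rw [hMb _ hb3, hφb _ hb']
      show qmap N K (L ![y 0, y 1]) = _
      rw [hLb _ hb']
      rfl
    · refine base_of_G hE ?_
      rw [hM _ (Or.inr h1), hψ1 _ h1]
      exact hZG _

lemma deg_surj (hE : ∅ ∈ K) (hU : IsOpen (UK K))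
    (hV : ∀ x : Fin r → ℂ, (∀ i j, i ≠ j → x i ≠ 0 ∨ x j ≠ 0) → x ∈ UK K)
    {d : Fin r → ℤ} (hd : ∀ l, ∑ k, N k l * d k = 0) :
    ∃ F : C(Fin 2 → unitInterval, XS N K),
      (∀ x ∈ Cube.boundary (Fin 2), F x = baseX N K hE) ∧ IsDeg N K hE F d := by
  let z : unitInterval → Fin r → ℂ := fun u k => 2 * Real.pi * Complex.I * d k * ((u : ℝ) : ℂ)
  have hzc : Continuous z := by
    refine continuous_pi fun k => ?_
    simp only [z]; fun_prop
  have hzG : ∀ u, (fun k => Complex.exp (z u k)) ∈ GSet N := by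
    intro u
    refine exp_mem_G fun l => ?_
    have h1 : ((∑ k, N k l * d k : ℤ) : ℂ) = 0 := by rw [hd l]; simp
    push_cast at h1
    calc ∑ k, (N k l : ℂ) * z u k
        = 2 * Real.pi * Complex.I * ((u : ℝ) : ℂ) * ∑ k, (N k l : ℂ) * d k := by
          rw [Finset.mul_sum]
          exact Finset.sum_congr rfl fun k _ => by simp only [z]; ring
      _ = 0 := by rw [h1, mul_zero]
  have hzU : ∀ u, (fun k => Complex.exp (z u k)) ∈ UK K := fun x =>
    mem_UK.2 fun σ hσ => by
      rcases Finset.nonempty_iff_ne_empty.2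
        (fun he : σ = ∅ => hσ (by rw [he]; exact hE)) with ⟨i, hi⟩
      exact ⟨i, hi, Complex.exp_ne_zero _⟩
  have hec : Continuous fun (x : Fin 2 → unitInterval) k => Complex.exp (z (x 0) k) :=
    continuous_pi fun k => Complex.continuous_exp.comp
      ((continuous_apply k).comp (hzc.comp (continuous_apply 0)))
  have hcl : IsClosed {x : Fin 2 → unitInterval | x 1 = 1} :=
    isClosed_eq (continuous_apply _) continuous_const
  obtain ⟨ψ, hψ, hψ0, hψ1⟩ := glue_ex (isClosed_openBox (1 : Fin 2)) hcl
    (f := fun _ => onesUK hE) continuousOn_const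
    (g := fun x => (⟨_, hzU (x 0)⟩ : UK K))
    (hec.subtype_mk fun x => hzU (x 0)).continuousOn (by
      intro x hx hx1
      have hx1 : x 1 = 1 := hx1
      apply Subtype.ext
      funext k
      show (1 : ℂ) = Complex.exp (z (x 0) k)
      rcases mem_box2.1 hx with h | h | h
      · exact (zero_ne_one (h.symm.trans hx1)).elim
      · simp [z, h]
      · simp only [z, h]
        have := exp_deg (d k)
        simpa using this.symm)
  obtain ⟨M, hM⟩ := ext_cube (ι := Fin 2) (by simp) _ hU hV _
    ((isClosed_openBox (1 : Fin 2)).union hcl) ψ hψ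
  refine ⟨(qCont N K).comp M, ?_, M, z, fun x => rfl, ?_, hzc, ?_, ?_, ?_⟩
  · intro x hx
    show qmap N K (M x) = _
    rcases bdry2 hx with hb | h1
    · rw [hM x (Or.inl hb), hψ0 x hb]; rfl
    · refine base_of_G hE ?_
      rw [hM _ (Or.inr h1), hψ1 _ h1]
      exact hzG _
  · intro x hb
    rw [hM x (Or.inl hb), hψ0 x hb]
  · funext k; simp [z]
  · intro u k
    rw [hM _ (Or.inr rfl), hψ1 _ rfl]; rfl
  · intro k; simp [z]

end deg

/-! ### The homotopy groups via degrees -/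

section groups

lemma transAt_left {ι X : Type*} [TopologicalSpace X] {x : X} [DecidableEq ι] (i : ι)
    (f g : GenLoop ι X x) (t : ι → unitInterval) (h : (t i : ℝ) ≤ 1 / 2) :
    GenLoop.transAt i f g t =
      f (Function.update t i (Set.projIcc 0 1 zero_le_one (2 * (t i : ℝ)))) := by
  exact if_pos h

lemma transAt_right {ι X : Type*} [TopologicalSpace X] {x : X} [DecidableEq ι] (i : ι)
    (f g : GenLoop ι X x) (t : ι → unitInterval) (h : ¬ (t i : ℝ) ≤ 1 / 2) :
    GenLoop.transAt i f g t =
      g (Function.update t i (Set.projIcc 0 1 zero_le_one (2 * (t i : ℝ) - 1))) := by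
  exact if_neg h

lemma iso_of_deg {ι X D : Type*} [TopologicalSpace X] {x : X} [DecidableEq ι] [Nonempty ι]
    [AddCommGroup D] (i : ι) (deg : GenLoop ι X x → D)
    (h1 : ∀ f g, GenLoop.Homotopic f g ↔ deg f = deg g) (h2 : Function.Surjective deg)
    (h3 : ∀ f g, deg (GenLoop.transAt i f g) = deg f + deg g) :
    Nonempty (HomotopyGroup ι X x ≃* Multiplicative D) := by
  let φ : HomotopyGroup ι X x → Multiplicative D :=
    Quotient.lift (fun f => Multiplicative.ofAdd (deg f)) fun f g h =>
      congrArg Multiplicative.ofAdd ((h1 f g).1 h)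
  have hφ : Function.Bijective φ := by
    constructor
    · rintro ⟨f⟩ ⟨g⟩ h
      exact Quotient.sound ((h1 f g).2 h)
    · intro d
      obtain ⟨f, hf⟩ := h2 (Multiplicative.toAdd d)
      exact ⟨Quotient.mk _ f, congrArg Multiplicative.ofAdd hf⟩
  have hm : ∀ a b, φ (a * b) = φ a * φ b := by
    rintro ⟨f⟩ ⟨g⟩
    have := HomotopyGroup.mul_spec (i := i) (p := f) (q := g)
    refine (congrArg φ this).trans ?_
    show Multiplicative.ofAdd (deg _) = Multiplicative.ofAdd (deg f) * Multiplicative.ofAdd (deg g)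
    rw [h3, add_comm, ofAdd_add]
  exact ⟨MulEquiv.ofBijective (MulHom.mk φ hm) hφ⟩

variable {n r : ℕ} {N : Fin r → Fin n → ℤ} {K : Set (Finset (Fin r))}

lemma deg_add {hE : ∅ ∈ K} {F F' F'' : (Fin 2 → unitInterval) → XS N K} {d d' : Fin r → ℤ}
    (h : IsDeg N K hE F d) (h' : IsDeg N K hE F' d')
    (e1 : ∀ x, (x 0 : ℝ) ≤ 1 / 2 →
      F'' x = F ![Set.projIcc 0 1 zero_le_one (2 * (x 0 : ℝ)), x 1])
    (e2 : ∀ x, ¬ (x 0 : ℝ) ≤ 1 / 2 →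
      F'' x = F' ![Set.projIcc 0 1 zero_le_one (2 * (x 0 : ℝ) - 1), x 1]) :
    IsDeg N K hE F'' (d + d') := by
  obtain ⟨L, z, hL, hLb, hzc, hz0, hze, hz1⟩ := h
  obtain ⟨L', z', hL', hLb', hzc', hz0', hze', hz1'⟩ := h'
  let a : unitInterval → unitInterval := fun u => Set.projIcc 0 1 zero_le_one (2 * (u : ℝ))
  let b : unitInterval → unitInterval := fun u => Set.projIcc 0 1 zero_le_one (2 * (u : ℝ) - 1)
  have ha : Continuous a := continuous_projIcc.comp (by fun_prop)
  have hb : Continuous b := continuous_projIcc.comp (by fun_prop)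
  have ha1 : ∀ u : unitInterval, ¬ (u : ℝ) ≤ 1 / 2 → a u = 1 := fun u hu => by
    push Not at hu
    exact Set.projIcc_of_right_le _ (by linarith)
  have hb0 : ∀ u : unitInterval, (u : ℝ) ≤ 1 / 2 → b u = 0 := fun u hu =>
    Set.projIcc_of_le_left _ (by linarith)
  have c1 : Continuous fun x : Fin 2 → unitInterval => L ![a (x 0), x 1] :=
    L.continuous.comp (continuous_vec2 (ha.comp (continuous_apply 0)) (continuous_apply 1))
  have c2 : Continuous fun x : Fin 2 → unitInterval => L' ![b (x 0), x 1] :=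
    L'.continuous.comp (continuous_vec2 (hb.comp (continuous_apply 0)) (continuous_apply 1))
  let P : (Fin 2 → unitInterval) → Fin r → ℂ := fun x k =>
    (L ![a (x 0), x 1] : Fin r → ℂ) k * (L' ![b (x 0), x 1] : Fin r → ℂ) k
  have hPc : Continuous P := continuous_pi fun k =>
    ((continuous_apply k).comp (continuous_subtype_val.comp c1)).mul
      ((continuous_apply k).comp (continuous_subtype_val.comp c2))
  have hPl : ∀ x : Fin 2 → unitInterval, (x 0 : ℝ) ≤ 1 / 2 → P x = L ![a (x 0), x 1] := by
    intro x hx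
    funext k
    simp only [P]
    rw [hLb' ![b (x 0), x 1] (mem_box2.2 (Or.inr (Or.inl (hb0 _ hx))))]
    exact mul_one _
  have hPr : ∀ x : Fin 2 → unitInterval, ¬ (x 0 : ℝ) ≤ 1 / 2 → P x = L' ![b (x 0), x 1] := by
    intro x hx
    funext k
    simp only [P]
    rw [hLb ![a (x 0), x 1] (mem_box2.2 (Or.inr (Or.inr (ha1 _ hx))))]
    exact one_mul _
  have hPU : ∀ x, P x ∈ UK K := by
    intro x
    by_cases hx : (x 0 : ℝ) ≤ 1 / 2
    · rw [hPl x hx]; exact (L _).2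
    · rw [hPr x hx]; exact (L' _).2
  refine ⟨⟨fun x => ⟨P x, hPU x⟩, hPc.subtype_mk hPU⟩, fun u => z (a u) + z' (b u),
    ?_, ?_, (hzc.comp ha).add (hzc'.comp hb), ?_, ?_, ?_⟩
  · intro x
    show qmap N K ⟨P x, hPU x⟩ = F'' x
    by_cases hx : (x 0 : ℝ) ≤ 1 / 2
    · rw [e1 x hx, ← hL]
      exact congrArg _ (Subtype.ext (hPl x hx))
    · rw [e2 x hx, ← hL']
      exact congrArg _ (Subtype.ext (hPr x hx))
  · intro x hx
    apply Subtype.ext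
    show P x = onesC
    have hA : L ![a (x 0), x 1] = onesUK hE := by
      refine hLb _ (mem_box2.2 ?_)
      rcases mem_box2.1 hx with h | h | h
      · exact Or.inl h
      · exact Or.inr (Or.inl (by
          show a (x 0) = 0
          rw [h]; exact Set.projIcc_of_le_left _ (by simp)))
      · exact Or.inr (Or.inr (ha1 _ (by rw [h]; norm_num)))
    have hB : L' ![b (x 0), x 1] = onesUK hE := by
      refine hLb' _ (mem_box2.2 ?_)
      rcases mem_box2.1 hx with h | h | h
      · exact Or.inl h
      · exact Or.inr (Or.inl (hb0 _ (by rw [h]; norm_num)))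
      · exact Or.inr (Or.inr (by
          show b (x 0) = 1
          rw [h]; exact Set.projIcc_of_right_le _ (by norm_num)))
    funext k
    simp only [P]
    rw [hA, hB]
    exact one_mul _
  · have h1 : a 0 = 0 := Set.projIcc_of_le_left _ (by simp)
    have h2 : b 0 = 0 := hb0 _ (by norm_num)
    show z (a 0) + z' (b 0) = 0
    rw [h1, h2, hz0, hz0', add_zero]
  · intro u k
    show Complex.exp (z (a u) k + z' (b u) k) = P ![u, 1] k
    rw [Complex.exp_add, hze, hze']
    rfl
  · intro k
    have h1 : a 1 = 1 := ha1 _ (by norm_num)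
    have h2 : b 1 = 1 := Set.projIcc_of_right_le _ (by norm_num)
    show z (a 1) k + z' (b 1) k = _
    rw [h1, h2, hz1, hz1', Pi.add_apply]
    push_cast
    ring

/-- The group of integral relations. -/
def relMod (N : Fin r → Fin n → ℤ) : Submodule ℤ (Fin r → ℤ) :=
  LinearMap.ker (Fintype.linearCombination ℤ N)

lemma mem_relMod {d : Fin r → ℤ} : d ∈ relMod N ↔ ∀ l, ∑ k, N k l * d k = 0 := by
  rw [relMod, LinearMap.mem_ker, Fintype.linearCombination_apply, funext_iff]
  refine forall_congr' fun l => ?_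
  simp only [Finset.sum_apply, Pi.smul_apply, smul_eq_mul, Pi.zero_apply]
  simp only [mul_comm]

lemma relMod_equiv (h2 : Cond2 N) : Nonempty (relMod N ≃ₗ[ℤ] (Fin (r - n) → ℤ)) := by
  have hr : LinearMap.range (Fintype.linearCombination ℤ N) = ⊤ := by
    rw [Fintype.range_linearCombination]; exact h2
  have h := Submodule.finrank_quotient_add_finrank (relMod N)
  have e := ((Fintype.linearCombination ℤ N).quotKerEquivOfSurjective
    (LinearMap.range_eq_top.1 hr)).finrank_eq
  have e' : Module.finrank ℤ ((Fin r → ℤ) ⧸ relMod N) = n :=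
    e.trans (Module.finrank_fin_fun ℤ)
  rw [e', Module.finrank_fin_fun] at h
  refine ⟨LinearEquiv.ofFinrankEq _ _ ?_⟩
  rw [Module.finrank_fin_fun]
  omega

/-- A degree function on two-dimensional loops. -/
lemma exists_deg (hs : Splits N K) (hE : ∅ ∈ K) :
    ∃ deg : GenLoop (Fin 2) (XS N K) (baseX N K hE) → relMod N,
      ∀ f, IsDeg N K hE f.1 (deg f) := by
  choose dg hdg using fun f : GenLoop (Fin 2) (XS N K) (baseX N K hE) =>
    deg_exists hs hE f.1 f.2
  exact ⟨fun f => ⟨dg f, mem_relMod.2 (deg_ker hE f.2 (hdg f))⟩, hdg⟩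

lemma deg_eq (hs : Splits N K) (hE : ∅ ∈ K) {f : GenLoop (Fin 2) (XS N K) (baseX N K hE)}
    {d d' : relMod N} (h : IsDeg N K hE f.1 d) (h' : IsDeg N K hE f.1 d') : d = d' :=
  Subtype.ext (deg_unique hs hE f.2 (ContinuousMap.HomotopyRel.refl _ _) h h')

lemma deg_iff (hs : Splits N K) (hE : ∅ ∈ K) (hU : IsOpen (UK K))
    (hV : ∀ x : Fin r → ℂ, (∀ i j, i ≠ j → x i ≠ 0 ∨ x j ≠ 0) → x ∈ UK K)
    {f g : GenLoop (Fin 2) (XS N K) (baseX N K hE)}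
    {d d' : relMod N} (h : IsDeg N K hE f.1 d) (h' : IsDeg N K hE g.1 d') :
    GenLoop.Homotopic f g ↔ d = d' := by
  constructor
  · rintro ⟨H⟩
    exact Subtype.ext (deg_unique hs hE f.2 H h h')
  · rintro rfl
    exact deg_homotopic hE hU hV f.2 g.2 h h'

lemma upd2 {ι : Type*} [DecidableEq (Fin 2)] (t : Fin 2 → ι) (a : ι) :
    Function.update t 0 a = ![a, t 1] := by
  funext i
  fin_cases i
  · simp
  · simp

lemma pi2_iso [DecidableEq (Fin 2)] (hs : Splits N K) (hE : ∅ ∈ K) (hU : IsOpen (UK K))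
    (hV : ∀ x : Fin r → ℂ, (∀ i j, i ≠ j → x i ≠ 0 ∨ x j ≠ 0) → x ∈ UK K) :
    Nonempty (HomotopyGroup (Fin 2) (XS N K) (baseX N K hE) ≃* Multiplicative (relMod N)) := by
  obtain ⟨deg, hdeg⟩ := exists_deg hs hE
  refine iso_of_deg 0 deg (fun f g => deg_iff hs hE hU hV (hdeg f) (hdeg g)) ?_ ?_
  · rintro ⟨d, hd⟩
    obtain ⟨F, hF, hFd⟩ := deg_surj hE hU hV (mem_relMod.1 hd)
    exact ⟨⟨F, hF⟩, deg_eq hs hE (hdeg ⟨F, hF⟩) hFd⟩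
  · intro f g
    refine deg_eq hs hE (hdeg _) (deg_add (hdeg f) (hdeg g) ?_ ?_)
    · intro x hx
      refine (transAt_left 0 f g x hx).trans ?_
      rw [upd2]; rfl
    · intro x hx
      refine (transAt_right 0 f g x hx).trans ?_
      rw [upd2]; rfl

/-- A one-dimensional loop in the loop space gives a two-dimensional loop. -/
def J {Z : Type*} [TopologicalSpace Z] {z0 : Z}
    (f : GenLoop (Fin 1) (Loop Z z0) (Loop.const z0)) : GenLoop (Fin 2) Z z0 :=
  ⟨⟨fun t => (f fun _ => t 0).1 (eMap (t 1)),
    loop_uncurry (p := fun t : Fin 2 → unitInterval => f fun _ => t 0)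
      (f.1.continuous.comp (by fun_prop)) (continuous_apply 1)⟩, by
    rintro y ⟨i, hi⟩
    show (f fun _ => y 0).1 (eMap (y 1)) = z0
    fin_cases i
    · have : f (fun _ => y 0) = Loop.const z0 := f.2 _ ⟨0, hi⟩
      rw [this]; rfl
    · exact loop_at _ hi⟩

lemma fin1_eta {ι : Type*} (y : Fin 1 → ι) : (fun _ => y 0) = y := by
  funext i
  rw [Subsingleton.elim i 0]

lemma J_surj {Z : Type*} [TopologicalSpace Z] {z0 : Z} (F : GenLoop (Fin 2) Z z0) :
    ∃ f : GenLoop (Fin 1) (Loop Z z0) (Loop.const z0), J f = F := by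
  obtain ⟨p, hp⟩ := loop_curry (z0 := z0)
    (⟨fun y : (Fin 1 → unitInterval) × unitInterval => F.1 ![y.1 0, y.2],
      F.1.continuous.comp (continuous_vec2 ((continuous_apply 0).comp continuous_fst)
        continuous_snd)⟩)
    (fun y t ht => F.2 _ ⟨1, ht⟩)
  refine ⟨⟨p, ?_⟩, ?_⟩
  · rintro y ⟨i, hi⟩
    rw [Subsingleton.elim i 0] at hi
    refine loop_ext fun t => ?_
    rw [hp]
    exact F.2 _ ⟨0, hi⟩
  · apply GenLoop.ext
    intro t
    show (p fun _ => t 0).1 (eMap (t 1)) = F.1 t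
    rw [hp]
    show F.1 ![t 0, t 1] = F.1 t
    congr 1
    funext i; fin_cases i <;> rfl

lemma J_homotopic {Z : Type*} [TopologicalSpace Z] {z0 : Z}
    (f g : GenLoop (Fin 1) (Loop Z z0) (Loop.const z0)) :
    GenLoop.Homotopic f g ↔ GenLoop.Homotopic (J f) (J g) := by
  constructor
  · rintro ⟨H⟩
    have hH : ∀ s y, (y ∈ Cube.boundary (Fin 1)) → H (s, y) = f y := fun s y hy => H.eq_fst s hy
    refine ⟨{ toFun := fun x => (H (x.1, fun _ => x.2 0)).1 (eMap (x.2 1)),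
              continuous_toFun := loop_uncurry
                (p := fun x : unitInterval × (Fin 2 → unitInterval) => H (x.1, fun _ => x.2 0))
                (H.continuous.comp (by fun_prop)) ((continuous_apply 1).comp continuous_snd),
              map_zero_left := fun y => ?_, map_one_left := fun y => ?_, prop' := ?_ }⟩
    · show (H (0, fun _ => y 0)).1 (eMap (y 1)) = _
      rw [H.apply_zero]; rfl
    · show (H (1, fun _ => y 0)).1 (eMap (y 1)) = _
      rw [H.apply_one]; rfl
    · rintro s y ⟨i, hi⟩
      show (H (s, fun _ => y 0)).1 (eMap (y 1)) = (f fun _ => y 0).1 (eMap (y 1))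
      fin_cases i
      · rw [hH s _ ⟨0, hi⟩]
      · exact (loop_at _ hi).trans (loop_at _ hi).symm
  · rintro ⟨H⟩
    have hb : ∀ s y, y ∈ Cube.boundary (Fin 2) → H (s, y) = z0 := fun s y hy =>
      (H.eq_fst s hy).trans ((J f).2 y hy)
    obtain ⟨p, hp⟩ := loop_curry (z0 := z0)
      (⟨fun y : (unitInterval × (Fin 1 → unitInterval)) × unitInterval =>
          H (y.1.1, ![y.1.2 0, y.2]),
        H.continuous.comp ((continuous_fst.comp continuous_fst).prodMk
          (continuous_vec2 ((continuous_apply 0).comp (continuous_snd.comp continuous_fst))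
          continuous_snd))⟩)
      (fun y t ht => hb _ _ ⟨1, ht⟩)
    refine ⟨{ toContinuousMap := p, map_zero_left := fun y => ?_, map_one_left := fun y => ?_,
              prop' := ?_ }⟩
    · refine loop_ext fun t => ?_
      refine (hp (0, y) t).trans ?_
      refine (H.apply_zero ![y 0, t]).trans ?_
      show (f fun _ => y 0).1 (eMap t) = (f y).1 (eMap t)
      rw [fin1_eta]
    · refine loop_ext fun t => ?_
      refine (hp (1, y) t).trans ?_
      refine (H.apply_one ![y 0, t]).trans ?_
      show (g fun _ => y 0).1 (eMap t) = (g y).1 (eMap t)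
      rw [fin1_eta]
    · intro s y hy
      refine loop_ext fun t => ?_
      refine (hp (s, y) t).trans ?_
      obtain ⟨i, hi⟩ := hy
      rw [Subsingleton.elim i 0] at hi
      refine (hb s ![y 0, t] ⟨0, hi⟩).trans ?_
      have : f.1 y = Loop.const z0 := f.2 y ⟨0, hi⟩
      rw [this]; rfl

lemma upd1 {ι : Type*} [DecidableEq (Fin 1)] (t : Fin 1 → ι) (a : ι) :
    Function.update t 0 a = fun _ => a := by
  funext i
  rw [Subsingleton.elim i 0]
  simp

lemma pi1_iso [DecidableEq (Fin 1)] (hs : Splits N K) (hE : ∅ ∈ K) (hU : IsOpen (UK K))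
    (hV : ∀ x : Fin r → ℂ, (∀ i j, i ≠ j → x i ≠ 0 ∨ x j ≠ 0) → x ∈ UK K) :
    Nonempty (HomotopyGroup (Fin 1) (Loop (XS N K) (baseX N K hE)) (Loop.const _)
      ≃* Multiplicative (relMod N)) := by
  obtain ⟨deg, hdeg⟩ := exists_deg hs hE
  refine iso_of_deg 0 (fun f => deg (J f)) (fun f g => (J_homotopic f g).trans
    (deg_iff hs hE hU hV (hdeg (J f)) (hdeg (J g)))) ?_ ?_
  · rintro ⟨d, hd⟩
    obtain ⟨F, hF, hFd⟩ := deg_surj hE hU hV (mem_relMod.1 hd)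
    obtain ⟨f, hf⟩ := J_surj ⟨F, hF⟩
    refine ⟨f, ?_⟩
    show deg (J f) = _
    rw [hf]
    exact deg_eq hs hE (hdeg ⟨F, hF⟩) hFd
  · intro f g
    refine deg_eq hs hE (hdeg _) (deg_add (hdeg (J f)) (hdeg (J g)) ?_ ?_)
    · intro x hx
      show (GenLoop.transAt 0 f g fun _ => x 0).1 (eMap (x 1)) = _
      rw [transAt_left 0 f g _ hx, upd1]; rfl
    · intro x hx
      show (GenLoop.transAt 0 f g fun _ => x 0).1 (eMap (x 1)) = _
      rw [transAt_right 0 f g _ hx, upd1]; rfl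

lemma mult_iso {G D D' : Type*} [Group G] [AddCommGroup D] [AddCommGroup D']
    (h : Nonempty (G ≃* Multiplicative D)) (e : D ≃+ D') :
    Nonempty (G ≃* Multiplicative D') :=
  h.map fun a => a.trans e.toMultiplicative

end groups


/-- If the primitive generators span `ℤ^n`, then `π₂(X_Σ) ≅ ℤ^{r−n}`,
the loop space `Ω U(K_Σ)` is path connected and simply connected, and
`Ω q_Σ : Ω U(K_Σ) → Ω X_Σ` is a universal covering with fiber `ℤ^{r−n}`:
`π₁(Ω X_Σ) ≅ ℤ^{r−n}` and `(Ω q_Σ)_*` is an isomorphism on `π_k` for every `k ≥ 2`. -/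
theorem loop_qS_universal_covering
    {n r : ℕ} (F : Fan n) (N : Fin r → Fin n → ℤ)
    (hPG : IsPrimGens F N) (hNS : F.NonSingular) (h2 : Cond2 N) :
    Nonempty (HomotopyGroup (Fin 2) (XS N (KC F N)) (baseX N (KC F N) (empty_mem_KC F N))
        ≃* Multiplicative (Fin (r - n) → ℤ)) ∧
    PathConnectedSpace (Loop ↥(UK (KC F N)) (onesUK (empty_mem_KC F N))) ∧
    SimplyConnectedSpace (Loop ↥(UK (KC F N)) (onesUK (empty_mem_KC F N))) ∧
    Nonempty (HomotopyGroup (Fin 1)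
        (Loop (XS N (KC F N)) (baseX N (KC F N) (empty_mem_KC F N)))
        (Loop.const _) ≃* Multiplicative (Fin (r - n) → ℤ)) ∧
    ∀ (γ : Loop ↥(UK (KC F N)) (onesUK (empty_mem_KC F N))) (k : ℕ), 2 ≤ k →
      Function.Bijective (piMap k (loopMap (qCont N (KC F N)) rfl) γ) := by
  have hs : Splits N (KC F N) := fun σ hσ => exists_split hPG hNS h2 hσ
  have hE := empty_mem_KC F N
  have hU : IsOpen (UK (KC F N)) := isOpen_UK _
  have hV := generic_mem_UK hPG
  obtain ⟨e⟩ := relMod_equiv h2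
  exact ⟨mult_iso (pi2_iso hs hE hU hV) e.toAddEquiv, loop_pathConnected hE hU hV,
    loop_simplyConnected hE hU hV, mult_iso (pi1_iso hs hE hU hV) e.toAddEquiv,
    fun γ k hk => piMap_bijective hs hE γ k hk⟩

end Toric
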